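/- Let n ≥ 1 and let S be a smooth compact (2n−1)-dimensional hypersurface in ℝⁿ×ℝⁿ which has at least n+1 non-vanishing principal curvatures at every point, with normalized surface measure σ. Define the bilinear maximal function 𝔐^S(f,g)(x) = sup_{t>0} |∫_S f(x−ty) g(x−tz) dσ(y,z)| for f,g ∈ 𝒮(ℝⁿ). Then for every 1 < p, q, r ≤ ∞ with 1/r = 1/p + 1/q there is a constant C such that ‖𝔐^S(f,g)‖_{L^r(ℝⁿ)} ≤ C ‖f‖_{L^p(ℝⁿ)} ‖g‖_{L^q(ℝⁿ)}. -/

import Mathlib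

open MeasureTheory Metric Set
open scoped ENNReal NNReal SchwartzMap

noncomputable section

abbrev Rn (n : ℕ) : Type := EuclideanSpace ℝ (Fin n)

abbrev E2 (n : ℕ) : Type := Rn n × Rn n

/-- `L^r` quasi-norm (in `ℝ≥0∞`) of an `ℝ≥0∞`-valued function. -/
def lpNormE {α : Type*} [MeasurableSpace α] (μ : Measure α) (F : α → ℝ≥0∞) (r : ℝ≥0∞) : ℝ≥0∞ :=
  if r = 0 then 0 else if r = ∞ then essSup F μ
  else (∫⁻ x, F x ^ r.toReal ∂μ) ^ (1 / r.toReal)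

/-- The Hessian of `Φ` at `x`, as a bilinear map. -/
def hess {n : ℕ} (Φ : E2 n → ℝ) (x u v : E2 n) : ℝ :=
  fderiv ℝ (fun y => fderiv ℝ Φ y v) x u

/-- `S` is a smooth compact hypersurface of `ℝⁿ × ℝⁿ` having at least `k`
non-vanishing principal curvatures at every point: near each `p ∈ S` the set `S` is the
zero set of a smooth defining function `Φ` with non-vanishing gradient, and the second
fundamental form (i.e. the Hessian of `Φ` restricted to the tangent space `ker dΦ_p`)
is non-degenerate on some `k`-dimensional subspace of the tangent space. -/
def IsSmoothHypersurfaceWithCurvatures (n k : ℕ) (S : Set (E2 n)) : Prop :=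
  IsCompact S ∧
  ∀ p ∈ S, ∃ (U : Set (E2 n)) (Φ : E2 n → ℝ),
    IsOpen U ∧ p ∈ U ∧ ContDiff ℝ (⊤ : ℕ∞) Φ ∧ S ∩ U = {x ∈ U | Φ x = 0} ∧
    fderiv ℝ Φ p ≠ 0 ∧
    ∃ W : Submodule ℝ (E2 n),
      (∀ w ∈ W, fderiv ℝ Φ p w = 0) ∧
      Module.finrank ℝ W = k ∧
      ∀ w ∈ W, w ≠ 0 → ∃ w' ∈ W, hess Φ p w w' ≠ 0

/-- The normalized surface measure on `S`: the normalized `(2n-1)`-dimensional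
Hausdorff measure restricted to `S`. -/
def μSurf (n : ℕ) (S : Set (E2 n)) : Measure (E2 n) :=
  (μH[(2 * (n : ℝ) - 1)] S)⁻¹ • (μH[(2 * (n : ℝ) - 1)]).restrict S

/-- The bilinear maximal function `𝔐^S(f,g)(x) = sup_{t>0} |∫_S f(x-ty) g(x-tz) dσ(y,z)|`. -/
def biMaxS (n : ℕ) (S : Set (E2 n)) (f g : Rn n → ℝ) (x : Rn n) : ℝ≥0∞ :=
  ⨆ t ∈ Ioi (0 : ℝ),
    ENNReal.ofReal |∫ p, f (x - t • p.1) * g (x - t • p.2) ∂(μSurf n S)|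

/-!
Hölder's inequality on `S` gives
`𝔐^S(f, g) ≤ (M_{σ₁} |f|^s)^{1/s} (M_{σ₂} |g|^{s'})^{1/s'}`, where `σ₁, σ₂` are the marginals of
`σ` and `M_μ f (x) = sup_{t > 0} ∫ f (x - t y) dμ(y)`. As `1/p + 1/q = 1/r < 1`, conjugate exponents
with `s < p` and `s' < q` exist, so it is enough that `M_μ` is bounded on `L^p`, for all `p > 1`,
when `μ` is a marginal of `σ`.

The maximal operator of the averages over dilates of a ball of radius `κ` at bounded distance from
the origin is of weak type `(1, 1)` with constant `O(κ⁻¹)`, so its `L^p` norm is `O(κ^{-1/p})`.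
Hence `M_μ` is bounded as soon as `μ` is at most a superposition of normalized balls such that
`κ^{-1/p}` is integrable over their radii `κ` for all `p > 1`.

Locally `S` is a graph over its tangent space. If the projection `π` maps the tangent space onto
`ℝⁿ`, then the marginal has bounded density nearby. Otherwise the `n + 1` curvatures provide two
directions in `ker π` along which the derivatives `A` and `B` of the graph function have independent
differentials. Averaging the surface measure at the scale `κ ∼ max (|A|, |B|)` along one of these
directions and a complement of `ker π` is, after projection, a change of variables with Jacobian
`∼ κ`. This bounds the marginal by normalized balls of radius `∼ κ` with weight `κ⁻¹`. As `A` and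
`B` serve as two of the coordinates, `κ^{-1-1/p}` is integrable for `1 + 1/p < 2`.
-/

section Measure

theorem lowerSemicontinuous_lintegral {X Y : Type*} [TopologicalSpace X]
    [FirstCountableTopology X] [MeasurableSpace Y] {μ : Measure Y} {F : X → Y → ℝ≥0∞}
    (hm : ∀ x, Measurable (F x)) (hc : ∀ y, Continuous fun x => F x y) :
    LowerSemicontinuous fun x => ∫⁻ y, F x y ∂μ := fun x =>
  lowerSemicontinuousAt_iff_le_liminf.2 <|
    calc ∫⁻ y, F x y ∂μ = ∫⁻ y, Filter.liminf (fun z => F z y) (nhds x) ∂μ :=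
          lintegral_congr fun y => ((hc y).tendsto x).liminf_eq.symm
      _ ≤ Filter.liminf (fun z => ∫⁻ y, F z y ∂μ) (nhds x) := lintegral_liminf_le hm

theorem lintegral_Ioc_rpow {T r : ℝ} (hT : 0 ≤ T) (hr : -1 < r) :
    ∫⁻ s in Ioc 0 T, ENNReal.ofReal (s ^ r) = ENNReal.ofReal (T ^ (r + 1) / (r + 1)) := by
  have hi : IntegrableOn (fun s : ℝ => s ^ r) (Ioc 0 T) :=
    (intervalIntegrable_iff_integrableOn_Ioc_of_le hT).1
      (intervalIntegral.intervalIntegrable_rpow' hr)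
  rw [← ofReal_integral_eq_lintegral_ofReal hi, ← intervalIntegral.integral_of_le hT,
    integral_rpow (Or.inl hr), Real.zero_rpow (by linarith), sub_zero]
  exact (ae_restrict_iff' measurableSet_Ioc).2 (.of_forall fun s hs => Real.rpow_nonneg hs.1.le _)

theorem setLIntegral_Ioi_indicator_mul_rpow_le {p : ℝ} (hp : 1 < p) {a b : ℝ≥0∞} (ha : a ≠ ∞)
    (hb : b ≠ ∞) :
    ∫⁻ s in Ioi (0 : ℝ), {s | ENNReal.ofReal s < b * a}.indicator
        (fun s => a * ENNReal.ofReal (s ^ (p - 2))) s ≤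
      b ^ (p - 1) * ENNReal.ofReal (p - 1)⁻¹ * a ^ p := by
  have hba : b * a ≠ ∞ := by finiteness
  have hsub : {s | ENNReal.ofReal s < b * a} ∩ Ioi 0 ⊆ Ioc 0 (b * a).toReal := fun s hs =>
    ⟨hs.2, ((ENNReal.ofReal_lt_iff_lt_toReal (le_of_lt hs.2) hba).1 hs.1).le⟩
  rw [lintegral_indicator (measurableSet_lt (by fun_prop) measurable_const),
    Measure.restrict_restrict (measurableSet_lt (by fun_prop) measurable_const)]
  calc ∫⁻ s in {s | ENNReal.ofReal s < b * a} ∩ Ioi 0, a * ENNReal.ofReal (s ^ (p - 2))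
      ≤ ∫⁻ s in Ioc 0 (b * a).toReal, a * ENNReal.ofReal (s ^ (p - 2)) := lintegral_mono_set hsub
    _ = a * ENNReal.ofReal ((b * a).toReal ^ (p - 1) / (p - 1)) := by
        rw [lintegral_const_mul _ (by fun_prop),
          lintegral_Ioc_rpow ENNReal.toReal_nonneg (by linarith)]
        ring_nf
    _ = b ^ (p - 1) * ENNReal.ofReal (p - 1)⁻¹ * (a * a ^ (p - 1)) := by
        rw [div_eq_mul_inv, ENNReal.ofReal_mul (by positivity),
          ← ENNReal.ofReal_rpow_of_nonneg ENNReal.toReal_nonneg (by linarith),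
          ENNReal.ofReal_toReal hba, ENNReal.mul_rpow_of_nonneg _ _ (by linarith)]
        ring
    _ = b ^ (p - 1) * ENNReal.ofReal (p - 1)⁻¹ * a ^ p := by
        nth_rewrite 1 [← ENNReal.rpow_one a]
        rw [← ENNReal.rpow_add_of_nonneg _ _ zero_le_one (by linarith), add_sub_cancel]

theorem measure_mul_rpow_le_of_weak_type {α : Type*} [MeasurableSpace α] {μ : Measure α}
    {f g : α → ℝ≥0∞} (hf : Measurable f) {A b : ℝ≥0∞} {p s : ℝ} (hs : 0 < s)
    (hweak : μ {x | ENNReal.ofReal s < g x} ≤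
      A * ENNReal.ofReal s⁻¹ * ∫⁻ x in {x | ENNReal.ofReal s < b * f x}, f x ∂μ) :
    μ {x | ENNReal.ofReal s < g x} * ENNReal.ofReal (s ^ (p - 1)) ≤
      A * ∫⁻ x, {s | ENNReal.ofReal s < b * f x}.indicator
        (fun s => f x * ENNReal.ofReal (s ^ (p - 2))) s ∂μ := by
  have hpow : ENNReal.ofReal s⁻¹ * ENNReal.ofReal (s ^ (p - 1)) = ENNReal.ofReal (s ^ (p - 2)) := by
    rw [← ENNReal.ofReal_mul (inv_nonneg.2 hs.le), ← Real.rpow_neg_one, ← Real.rpow_add hs]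
    ring_nf
  calc μ {x | ENNReal.ofReal s < g x} * ENNReal.ofReal (s ^ (p - 1))
      ≤ A * ENNReal.ofReal s⁻¹ * (∫⁻ x in {x | ENNReal.ofReal s < b * f x}, f x ∂μ) *
          ENNReal.ofReal (s ^ (p - 1)) := by gcongr
    _ = A * ((∫⁻ x in {x | ENNReal.ofReal s < b * f x}, f x ∂μ) *
          ENNReal.ofReal (s ^ (p - 2))) := by rw [← hpow]; ring
    _ = _ := by
        rw [← lintegral_mul_const _ hf,
          ← lintegral_indicator (measurableSet_lt measurable_const (by fun_prop))]
        rfl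

theorem lintegral_rpow_le_of_weak_type {α : Type*} [MeasurableSpace α] {μ : Measure α} [SFinite μ]
    {f g : α → ℝ≥0∞} (hf : Measurable f) (hg : Measurable g) (hftop : ∀ x, f x ≠ ∞)
    (hgtop : ∀ x, g x ≠ ∞) {A b : ℝ≥0∞} (hb : b ≠ ∞) {p : ℝ} (hp : 1 < p)
    (hweak : ∀ s : ℝ, 0 < s → μ {x | ENNReal.ofReal s < g x} ≤
      A * ENNReal.ofReal s⁻¹ * ∫⁻ x in {x | ENNReal.ofReal s < b * f x}, f x ∂μ) :
    ∫⁻ x, g x ^ p ∂μ ≤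
      ENNReal.ofReal p * (b ^ (p - 1) * ENNReal.ofReal (p - 1)⁻¹) * A * ∫⁻ x, f x ^ p ∂μ := by
  set k : ℝ → α → ℝ≥0∞ := fun s x =>
    {s | ENNReal.ofReal s < b * f x}.indicator (fun s => f x * ENNReal.ofReal (s ^ (p - 2))) s
  have hk : Measurable (Function.uncurry k) := by
    refine Measurable.indicator (s := {z : ℝ × α | ENNReal.ofReal z.1 < b * f z.2})
      (f := fun z => f z.2 * ENNReal.ofReal (z.1 ^ (p - 2))) (by fun_prop) ?_
    exact measurableSet_lt (by fun_prop) (by fun_prop)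
  have hlevel : ∀ s ∈ Ioi (0 : ℝ), μ {x | s < (g x).toReal} * ENNReal.ofReal (s ^ (p - 1)) ≤
      A * ∫⁻ x, k s x ∂μ := fun s hs => by
    simp_rw [← ENNReal.ofReal_lt_iff_lt_toReal (le_of_lt hs) (hgtop _)]
    exact measure_mul_rpow_le_of_weak_type hf hs (hweak s hs)
  calc ∫⁻ x, g x ^ p ∂μ = ∫⁻ x, ENNReal.ofReal ((g x).toReal ^ p) ∂μ :=
        lintegral_congr fun x => by
          rw [← ENNReal.ofReal_rpow_of_nonneg ENNReal.toReal_nonneg (by linarith),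
            ENNReal.ofReal_toReal (hgtop x)]
    _ = ENNReal.ofReal p * ∫⁻ s in Ioi (0 : ℝ),
          μ {x | s < (g x).toReal} * ENNReal.ofReal (s ^ (p - 1)) :=
        lintegral_rpow_eq_lintegral_meas_lt_mul _ (.of_forall fun x => ENNReal.toReal_nonneg)
          hg.ennreal_toReal.aemeasurable (by linarith)
    _ ≤ ENNReal.ofReal p * ∫⁻ s in Ioi (0 : ℝ), A * ∫⁻ x, k s x ∂μ := by
        gcongr ENNReal.ofReal p * ?_
        exact setLIntegral_mono' measurableSet_Ioi hlevel
    _ = ENNReal.ofReal p * (A * ∫⁻ x, (∫⁻ s in Ioi (0 : ℝ), k s x) ∂μ) := by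
        rw [lintegral_const_mul _ hk.lintegral_prod_right,
          lintegral_lintegral_swap hk.aemeasurable]
    _ ≤ ENNReal.ofReal p *
          (A * ∫⁻ x, b ^ (p - 1) * ENNReal.ofReal (p - 1)⁻¹ * f x ^ p ∂μ) := by
        gcongr ENNReal.ofReal p * (A * ?_)
        exact lintegral_mono fun x =>
          setLIntegral_Ioi_indicator_mul_rpow_le hp (hftop x) hb
    _ = _ := by
        rw [lintegral_const_mul _ (hf.pow_const _)]
        ring

theorem rpow_lintegral_le_of_weight {β : Type*} [MeasurableSpace β] {ν : Measure β}
    {F w : β → ℝ≥0∞} (hF : Measurable F) (hw : Measurable w) (hw0 : ∀ᵐ q ∂ν, w q ≠ 0)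
    (hwtop : ∀ᵐ q ∂ν, w q ≠ ∞) {p : ℝ} (hp : 1 < p) :
    (∫⁻ q, F q ∂ν) ^ p ≤ (∫⁻ q, w q ∂ν) ^ (p - 1) * ∫⁻ q, w q ^ (1 - p) * F q ^ p ∂ν := by
  have hp0 : 0 < p := by linarith
  have hpq : p.HolderConjugate (p / (p - 1)) := .conjExponent hp
  have hsplit : ∀ᵐ q ∂ν, F q = w q ^ (1 - p⁻¹) * (w q ^ (p⁻¹ - 1) * F q) := by
    filter_upwards [hw0, hwtop] with q hq0 hqtop
    rw [← mul_assoc, ← ENNReal.rpow_add _ _ hq0 hqtop]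
    simp
  have hwpow : ∀ q, (w q ^ (1 - p⁻¹)) ^ (p / (p - 1)) = w q := fun q => by
    rw [← ENNReal.rpow_mul, hpq.one_sub_inv, inv_mul_cancel₀ hpq.symm.ne_zero,
      ENNReal.rpow_one]
  have hFpow : ∀ q, (w q ^ (p⁻¹ - 1) * F q) ^ p = w q ^ (1 - p) * F q ^ p := fun q => by
    rw [ENNReal.mul_rpow_of_nonneg _ _ hp0.le, ← ENNReal.rpow_mul, sub_mul,
      inv_mul_cancel₀ hp0.ne', one_mul]
  have holder := ENNReal.lintegral_mul_le_Lp_mul_Lq ν hpq.symm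
    (f := fun q => w q ^ (1 - p⁻¹)) (g := fun q => w q ^ (p⁻¹ - 1) * F q)
    (by fun_prop) (by fun_prop)
  calc (∫⁻ q, F q ∂ν) ^ p = (∫⁻ q, w q ^ (1 - p⁻¹) * (w q ^ (p⁻¹ - 1) * F q) ∂ν) ^ p := by
        rw [← lintegral_congr_ae hsplit]
    _ ≤ ((∫⁻ q, w q ∂ν) ^ (1 / (p / (p - 1))) *
          (∫⁻ q, w q ^ (1 - p) * F q ^ p ∂ν) ^ (1 / p)) ^ p := by
        simp only [hwpow, hFpow] at holder
        exact ENNReal.rpow_le_rpow holder hp0.le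
    _ = _ := by
        rw [ENNReal.mul_rpow_of_nonneg _ _ hp0.le, ← ENNReal.rpow_mul, ← ENNReal.rpow_mul,
          one_div_mul_cancel hp0.ne', ENNReal.rpow_one, one_div_div, div_mul_cancel₀ _ hp0.ne']

theorem lintegral_rpow_lintegral_le_of_weight {α β : Type*} [MeasurableSpace α] [MeasurableSpace β]
    {μ : Measure α} {ν : Measure β} [SFinite μ] [SFinite ν] {F : α → β → ℝ≥0∞}
    (hF : Measurable (Function.uncurry F)) {w : β → ℝ≥0∞} (hw : Measurable w)
    (hw0 : ∀ᵐ q ∂ν, w q ≠ 0) (hwtop : ∀ᵐ q ∂ν, w q ≠ ∞) {p : ℝ} (hp : 1 < p) {A : ℝ≥0∞}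
    (hbound : ∀ᵐ q ∂ν, ∫⁻ x, F x q ^ p ∂μ ≤ w q ^ p * A) :
    ∫⁻ x, (∫⁻ q, F x q ∂ν) ^ p ∂μ ≤ (∫⁻ q, w q ∂ν) ^ p * A := by
  have hmeas : Measurable (Function.uncurry fun x q => w q ^ (1 - p) * F x q ^ p) :=
    ((hw.comp measurable_snd).pow_const _).mul (hF.pow_const _)
  calc ∫⁻ x, (∫⁻ q, F x q ∂ν) ^ p ∂μ
      ≤ ∫⁻ x, (∫⁻ q, w q ∂ν) ^ (p - 1) * ∫⁻ q, w q ^ (1 - p) * F x q ^ p ∂ν ∂μ :=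
        lintegral_mono fun x => rpow_lintegral_le_of_weight hF.of_uncurry_left hw hw0 hwtop hp
    _ = (∫⁻ q, w q ∂ν) ^ (p - 1) * ∫⁻ q, w q ^ (1 - p) * ∫⁻ x, F x q ^ p ∂μ ∂ν := by
        rw [lintegral_const_mul _ hmeas.lintegral_prod_right,
          lintegral_lintegral_swap hmeas.aemeasurable]
        congr! 3 with q
        exact lintegral_const_mul _ (hF.of_uncurry_right.pow_const _)
    _ ≤ (∫⁻ q, w q ∂ν) ^ (p - 1) * ∫⁻ q, w q * A ∂ν := by
        gcongr (∫⁻ q, w q ∂ν) ^ (p - 1) * ?_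
        refine lintegral_mono_ae ?_
        filter_upwards [hbound, hw0, hwtop] with q hq hq0 hqtop
        refine (mul_le_mul_right hq _).trans_eq ?_
        rw [← mul_assoc, ← ENNReal.rpow_add _ _ hq0 hqtop, sub_add_cancel, ENNReal.rpow_one]
    _ = (∫⁻ q, w q ∂ν) ^ p * A := by
        rw [lintegral_mul_const _ hw, ← mul_assoc]
        nth_rewrite 2 [← ENNReal.rpow_one (∫⁻ q, w q ∂ν)]
        rw [← ENNReal.rpow_add_of_nonneg _ _ (by linarith) zero_le_one, sub_add_cancel]

theorem measure_le_mul_lintegral_of_vitali {X : Type*} [TopologicalSpace X]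
    [TopologicalSpace.SeparableSpace X] [MeasurableSpace X] {μ : Measure X} {s : Set X}
    {B : X → Set X} {δ : X → ℝ} {f : X → ℝ≥0∞} {c : ℝ≥0∞} (hB : ∀ x ∈ s, MeasurableSet (B x))
    (hint : ∀ x ∈ s, (interior (B x)).Nonempty) (hδ : ∀ x ∈ s, 0 ≤ δ x) {R : ℝ}
    (hδR : ∀ x ∈ s, δ x ≤ R)
    (hloc : ∀ b ∈ s, μ {x ∈ s | (B x ∩ B b).Nonempty ∧ δ x ≤ 2 * δ b} ≤ c * ∫⁻ u in B b, f u ∂μ) :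
    μ s ≤ c * ∫⁻ u, f u ∂μ := by
  obtain ⟨u, hus, hdisj, hcover⟩ := Vitali.exists_disjoint_subfamily_covering_enlargement B s δ 2
    one_lt_two hδ R hδR fun x hx => (hint x hx).mono interior_subset
  have hcount : u.Countable := hdisj.countable_of_nonempty_interior fun x hx => hint x (hus hx)
  calc μ s ≤ μ (⋃ b ∈ u, {x ∈ s | (B x ∩ B b).Nonempty ∧ δ x ≤ 2 * δ b}) := by
        refine measure_mono fun x hx => ?_
        obtain ⟨b, hb, hxb⟩ := hcover x hx
        exact mem_biUnion hb ⟨hx, hxb⟩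
    _ ≤ ∑' b : u, μ {x ∈ s | (B x ∩ B b).Nonempty ∧ δ x ≤ 2 * δ b} :=
        measure_biUnion_le μ hcount _
    _ ≤ ∑' b : u, c * ∫⁻ z in B b, f z ∂μ := ENNReal.tsum_le_tsum fun b => hloc b (hus b.2)
    _ = c * ∫⁻ z in ⋃ b ∈ u, B b, f z ∂μ := by
        rw [ENNReal.tsum_mul_left, lintegral_biUnion hcount (fun b hb => hB b (hus hb)) hdisj]
    _ ≤ c * ∫⁻ z, f z ∂μ := by
        gcongr
        exact Measure.restrict_le_self

end Measure

section Balls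

variable {E : Type*} [NormedAddCommGroup E] [NormedSpace ℝ E] [MeasureSpace E] [BorelSpace E]
  [(volume : Measure E).IsAddHaarMeasure]

theorem volume_iUnion_closedBall_add_smul_le (a y : E) {r s L : ℝ} (hs : 0 < s) :
    volume (⋃ τ ∈ Icc 0 L, closedBall (a + τ • y) r) ≤
      (⌊L / s⌋₊ + 1 : ℕ) * volume (closedBall (0 : E) (r + s * ‖y‖)) := by
  calc volume (⋃ τ ∈ Icc 0 L, closedBall (a + τ • y) r)
      ≤ volume (⋃ i : Fin (⌊L / s⌋₊ + 1), closedBall (a + (i * s) • y) (r + s * ‖y‖)) := by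
        refine measure_mono (iUnion₂_subset fun τ hτ => ?_)
        have hfloor : ⌊τ / s⌋₊ * s ≤ τ := (le_div_iff₀ hs).1 (Nat.floor_le (div_nonneg hτ.1 hs.le))
        have hlt : τ < (⌊τ / s⌋₊ + 1) * s := (div_lt_iff₀ hs).1 (Nat.lt_floor_add_one _)
        have hi : ⌊τ / s⌋₊ < ⌊L / s⌋₊ + 1 :=
          Nat.lt_succ_of_le (Nat.floor_le_floor (div_le_div_of_nonneg_right hτ.2 hs.le))
        refine Subset.trans (closedBall_subset_closedBall' ?_) (subset_iUnion
          (fun i : Fin (⌊L / s⌋₊ + 1) => closedBall (a + (i * s) • y) (r + s * ‖y‖)) ⟨_, hi⟩)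
        rw [dist_add_left, dist_eq_norm, ← sub_smul, norm_smul, Real.norm_eq_abs,
          abs_of_nonneg (by linarith)]
        gcongr
        linarith
    _ ≤ ∑ i : Fin (⌊L / s⌋₊ + 1), volume (closedBall (a + (i * s) • y) (r + s * ‖y‖)) :=
        measure_iUnion_fintype_le _ _
    _ = _ := by
        simp [Measure.addHaar_closedBall_center]

variable [FiniteDimensional ℝ E]

theorem setLIntegral_ball_abs (f : E → ℝ≥0∞) (c : E) {r : ℝ} (hr : r ≠ 0) :
    ∫⁻ u in ball c |r|, f u =
      ENNReal.ofReal (|r| ^ Module.finrank ℝ E) * ∫⁻ b in ball (0 : E) 1, f (c + r • b) := by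
  have hemb : MeasurableEmbedding fun b : E => c + r • b :=
    ((Homeomorph.smulOfNeZero r hr).trans (Homeomorph.addLeft c)).measurableEmbedding
  have hmap : (volume : Measure E).map (fun b => c + r • b) =
      ENNReal.ofReal (|r| ^ Module.finrank ℝ E)⁻¹ • volume := by
    have h := Measure.map_map (μ := (volume : Measure E)) (g := (c + ·)) (f := (r • ·))
      (by fun_prop) (by fun_prop)
    rw [Measure.map_addHaar_smul _ hr, Measure.map_smul, map_add_left_eq_self] at h
    rw [← abs_pow, ← abs_inv]
    exact h.symm
  have hpre : (fun b : E => c + r • b) ⁻¹' ball c |r| = ball 0 1 := by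
    ext b
    simp [norm_smul, abs_pos.2 hr]
  rw [← hpre, ← hemb.lintegral_map f, ← hemb.restrict_map, hmap, Measure.restrict_smul,
    lintegral_smul_measure, smul_eq_mul, ← mul_assoc, ← ENNReal.ofReal_mul (by positivity),
    mul_inv_cancel₀ (pow_ne_zero _ (abs_ne_zero.2 hr)), ENNReal.ofReal_one, one_mul]

end Balls

section BallMaximal

variable {E : Type*} [NormedAddCommGroup E] [NormedSpace ℝ E] [MeasureSpace E]

/-- The maximal function of the averages of `f` over the sets `x - t B(y, κ)`, `t > 0`, normalized
by the volume of the unit ball instead of the volume of the averaging set. -/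
def ballMaximal (f : E → ℝ≥0∞) (y : E) (κ : ℝ) (x : E) : ℝ≥0∞ :=
  ⨆ t ∈ Ioi (0 : ℝ), ∫⁻ b in ball (0 : E) 1, f (x - t • (y + κ • b))

theorem measurable_ballMaximal [FiniteDimensional ℝ E] [BorelSpace E] {f : E → ℝ≥0∞}
    (hf : Continuous f) :
    Measurable fun q : E × E × ℝ => ballMaximal f q.2.1 q.2.2 q.1 := by
  have : SecondCountableTopology E := secondCountable_of_proper
  refine LowerSemicontinuous.measurable (lowerSemicontinuous_biSup fun t _ => ?_)
  exact lowerSemicontinuous_lintegral (fun q => hf.measurable.comp (by fun_prop))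
    (fun b => hf.comp (by fun_prop))

theorem ballMaximal_le_add {f g : E → ℝ≥0∞} {a : ℝ≥0∞} (h : ∀ x, f x ≤ g x + a) (y : E) (κ : ℝ)
    (x : E) : ballMaximal f y κ x ≤ ballMaximal g y κ x + a * volume (ball (0 : E) 1) :=
  iSup₂_le fun t ht =>
    calc ∫⁻ b in ball (0 : E) 1, f (x - t • (y + κ • b))
        ≤ ∫⁻ b in ball (0 : E) 1, (g (x - t • (y + κ • b)) + a) := lintegral_mono fun b => h _
      _ = (∫⁻ b in ball (0 : E) 1, g (x - t • (y + κ • b))) + a * volume (ball (0 : E) 1) := by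
          rw [lintegral_add_right _ measurable_const, setLIntegral_const]
      _ ≤ _ := by
          gcongr
          exact le_iSup₂ (f := fun t _ => ∫⁻ b in ball (0 : E) 1, g (x - t • (y + κ • b))) t ht

variable [FiniteDimensional ℝ E] [BorelSpace E] [(volume : Measure E).IsAddHaarMeasure]

theorem exists_lt_setLIntegral_closedBall {f : E → ℝ≥0∞} {y : E} {κ : ℝ} (hκ : 0 < κ) {x : E}
    {α : ℝ≥0∞} (hα : α < ballMaximal f y κ x) :
    ∃ t > (0 : ℝ), α * ENNReal.ofReal ((t * κ) ^ Module.finrank ℝ E) ≤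
      ∫⁻ u in closedBall (x - t • y) (t * κ), f u := by
  obtain ⟨t, ht, hαt⟩ : ∃ t > (0 : ℝ), α < ∫⁻ b in ball (0 : E) 1, f (x - t • (y + κ • b)) := by
    simpa only [ballMaximal, lt_iSup_iff, exists_prop, mem_Ioi] using hα
  have htκ : 0 < t * κ := mul_pos ht hκ
  refine ⟨t, ht, ?_⟩
  calc α * ENNReal.ofReal ((t * κ) ^ Module.finrank ℝ E)
      ≤ ENNReal.ofReal ((t * κ) ^ Module.finrank ℝ E) *
          ∫⁻ b in ball (0 : E) 1, f (x - t • (y + κ • b)) := by rw [mul_comm]; gcongr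
    _ = ∫⁻ u in ball (x - t • y) (t * κ), f u := by
        have h := setLIntegral_ball_abs f (x - t • y) (neg_ne_zero.2 htκ.ne')
        rw [abs_neg, abs_of_pos htκ] at h
        rw [h]
        congr! 4 with b
        module
    _ ≤ _ := lintegral_mono_set ball_subset_closedBall

theorem volume_closedBall_inter_tube_le {y : E} {κ R : ℝ} (hy : ‖y‖ ≤ R) (hκ : 0 < κ) (hκR : κ ≤ R)
    (a : E) {T : ℝ} (hT : 0 < T) :
    volume {x : E | ∃ t ∈ Icc 0 (2 * T),
        (closedBall (x - t • y) (t * κ) ∩ closedBall a (T * κ)).Nonempty} ≤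
      ENNReal.ofReal (3 * R * 4 ^ Module.finrank ℝ E) * volume (ball (0 : E) 1) *
        ENNReal.ofReal κ⁻¹ * ENNReal.ofReal ((T * κ) ^ Module.finrank ℝ E) := by
  have hR : 0 < R := hκ.trans_le hκR
  have hs : 0 < T * κ / R := by positivity
  have hcount : ((⌊2 * T / (T * κ / R)⌋₊ + 1 : ℕ) : ℝ≥0∞) ≤ ENNReal.ofReal (3 * R * κ⁻¹) := by
    rw [← ENNReal.ofReal_natCast]
    refine ENNReal.ofReal_le_ofReal ?_
    have hfloor : (⌊2 * T / (T * κ / R)⌋₊ : ℝ) ≤ 2 * T / (T * κ / R) := Nat.floor_le (by positivity)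
    have heq : 2 * T / (T * κ / R) = 2 * (R * κ⁻¹) := by field_simp
    have hone : 1 ≤ R * κ⁻¹ := by rwa [← div_eq_mul_inv, one_le_div hκ]
    push_cast
    linarith
  have hradius : 3 * (T * κ) + T * κ / R * ‖y‖ ≤ 4 * (T * κ) := by
    have : T * κ / R * ‖y‖ ≤ T * κ / R * R := by gcongr
    rw [div_mul_cancel₀ _ hR.ne'] at this
    linarith
  calc _ ≤ volume (⋃ t ∈ Icc 0 (2 * T), closedBall (a + t • y) (3 * (T * κ))) := by
        refine measure_mono fun x ⟨t, ht, w, hwx, hwa⟩ => mem_biUnion ht ?_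
        have htri := dist_triangle_left (x - t • y) a w
        have htκ : t * κ ≤ 2 * T * κ := by gcongr; exact ht.2
        rw [mem_closedBall] at hwx hwa
        rw [mem_closedBall, add_comm, ← dist_sub_right x _ (t • y), add_sub_cancel_left]
        linarith
    _ ≤ (⌊2 * T / (T * κ / R)⌋₊ + 1 : ℕ) *
          volume (closedBall (0 : E) (3 * (T * κ) + T * κ / R * ‖y‖)) :=
        volume_iUnion_closedBall_add_smul_le a y hs
    _ ≤ ENNReal.ofReal (3 * R * κ⁻¹) * volume (closedBall (0 : E) (4 * (T * κ))) := by
        gcongr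
    _ = _ := by
        rw [Measure.addHaar_closedBall _ _ (by positivity), mul_pow 4 (T * κ)]
        simp only [ENNReal.ofReal_mul, hR.le, Nat.ofNat_nonneg, pow_nonneg, mul_nonneg]
        ring

variable [Nontrivial E]

theorem volume_lt_ballMaximal_le {R : ℝ} {y : E} {κ : ℝ} (hy : ‖y‖ ≤ R) (hκ : 0 < κ) (hκR : κ ≤ R)
    (f : E → ℝ≥0∞) {α : ℝ≥0∞} (hα : α ≠ 0) (hαtop : α ≠ ∞) :
    volume {x | α < ballMaximal f y κ x} ≤
      ENNReal.ofReal (3 * R * 4 ^ Module.finrank ℝ E) * volume (ball (0 : E) 1) *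
        ENNReal.ofReal κ⁻¹ * α⁻¹ * ∫⁻ x, f x := by
  have hR : 0 < R := hκ.trans_le hκR
  have hv : volume (ball (0 : E) 1) ≠ 0 := (measure_ball_pos _ _ one_pos).ne'
  by_cases hI : ∫⁻ x, f x = ∞
  · rw [hI, ENNReal.mul_top]
    · exact le_top
    · simp [hv, hR, hκ, hαtop]
  have hradius : ∀ x ∈ {x | α < ballMaximal f y κ x}, ∃ t > 0,
      ENNReal.ofReal ((t * κ) ^ Module.finrank ℝ E) ≤
        α⁻¹ * ∫⁻ u in closedBall (x - t • y) (t * κ), f u := fun x hx => by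
    obtain ⟨t, ht, h⟩ := exists_lt_setLIntegral_closedBall hκ hx
    exact ⟨t, ht, by rwa [← ENNReal.div_eq_inv_mul,
      ENNReal.le_div_iff_mul_le (.inl hα) (.inl hαtop), mul_comm]⟩
  choose! t htpos ht using hradius
  refine measure_le_mul_lintegral_of_vitali (B := fun x => closedBall (x - t x • y) (t x * κ))
    (δ := t) (R := max 1 (α⁻¹ * ∫⁻ x, f x).toReal / κ) (fun _ _ => measurableSet_closedBall)
    (fun x hx => ?_) (fun x hx => (htpos x hx).le) (fun x hx => ?_) fun b hb => ?_
  · exact ⟨_, ball_subset_interior_closedBall (mem_ball_self (mul_pos (htpos x hx) hκ))⟩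
  · rw [le_div_iff₀ hκ, le_max_iff]
    refine or_iff_not_imp_left.2 fun h => (le_self_pow₀ (not_le.1 h).le
      (Module.finrank_pos (R := ℝ) (M := E)).ne').trans ?_
    refine (ENNReal.ofReal_le_iff_le_toReal (by finiteness)).1 ((ht x hx).trans ?_)
    gcongr
    exact Measure.restrict_le_self
  · refine (measure_mono fun x hx => ?_).trans ((volume_closedBall_inter_tube_le hy hκ hκR
      (b - t b • y) (htpos b hb)).trans ?_)
    · exact ⟨t x, ⟨(htpos x hx.1).le, hx.2.2⟩, hx.2.1⟩
    · rw [mul_assoc _ α⁻¹]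
      gcongr
      exact ht b hb

theorem volume_lt_ballMaximal_le_setLIntegral {R : ℝ} {y : E} {κ : ℝ} (hy : ‖y‖ ≤ R) (hκ : 0 < κ)
    (hκR : κ ≤ R) {f : E → ℝ≥0∞} (hf : Measurable f) {s : ℝ} (hs : 0 < s) :
    volume {x | ENNReal.ofReal s < ballMaximal f y κ x} ≤
      ENNReal.ofReal (3 * R * 4 ^ Module.finrank ℝ E) * volume (ball (0 : E) 1) *
        ENNReal.ofReal κ⁻¹ * 2 * ENNReal.ofReal s⁻¹ *
        ∫⁻ x in {x | ENNReal.ofReal s < 2 * volume (ball (0 : E) 1) * f x}, f x := by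
  set v := volume (ball (0 : E) 1)
  have hv0 : v ≠ 0 := (measure_ball_pos _ _ one_pos).ne'
  have hvtop : v ≠ ∞ := measure_ball_lt_top.ne
  set g := {x | ENNReal.ofReal s < 2 * v * f x}.indicator f
  have hfg : ∀ x, f x ≤ g x + ENNReal.ofReal s / (2 * v) := fun x => by
    by_cases hx : ENNReal.ofReal s < 2 * v * f x
    · simp only [g, indicator_of_mem (show x ∈ {x | ENNReal.ofReal s < 2 * v * f x} from hx),
        le_self_add]
    · refine le_add_left ?_
      rw [ENNReal.le_div_iff_mul_le (.inl (by simp [hv0])) (.inl (by finiteness)), mul_comm]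
      exact not_lt.1 hx
  have hhalf : ENNReal.ofReal s / (2 * v) * v = ENNReal.ofReal s / 2 := by
    rw [div_eq_mul_inv, ENNReal.mul_inv (by simp) (by simp), mul_assoc, mul_assoc,
      ENNReal.inv_mul_cancel hv0 hvtop, mul_one, div_eq_mul_inv]
  have hsub : {x | ENNReal.ofReal s < ballMaximal f y κ x} ⊆
      {x | ENNReal.ofReal s / 2 < ballMaximal g y κ x} := fun x hx => by
    rw [mem_ofPred_eq] at hx ⊢
    by_contra! hle
    refine hx.not_ge ?_
    calc ballMaximal f y κ x ≤ ballMaximal g y κ x + ENNReal.ofReal s / (2 * v) * v :=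
          ballMaximal_le_add hfg y κ x
      _ ≤ ENNReal.ofReal s / 2 + ENNReal.ofReal s / 2 := by rw [hhalf]; gcongr
      _ = ENNReal.ofReal s := ENNReal.add_halves _
  refine (measure_mono hsub).trans ((volume_lt_ballMaximal_le hy hκ hκR g
    (ENNReal.div_pos (by simpa using hs) (by simp)).ne' (by finiteness)).trans_eq ?_)
  rw [ENNReal.inv_div (by simp) (by simp), div_eq_mul_inv, ← ENNReal.ofReal_inv_of_pos hs,
    lintegral_indicator (measurableSet_lt measurable_const (by fun_prop))]
  ring

theorem exists_lintegral_ballMaximal_rpow_le (E : Type*) [NormedAddCommGroup E] [NormedSpace ℝ E]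
    [MeasureSpace E] [FiniteDimensional ℝ E] [BorelSpace E]
    [(volume : Measure E).IsAddHaarMeasure] [Nontrivial E] (R : ℝ) {p : ℝ} (hp : 1 < p) :
    ∃ C : ℝ≥0, ∀ (y : E) (κ : ℝ) (f : E → ℝ≥0∞) (M : ℝ≥0), ‖y‖ ≤ R → 0 < κ → κ ≤ R →
      Continuous f → (∀ x, f x ≤ M) →
      ∫⁻ x, ballMaximal f y κ x ^ p ≤ C * ENNReal.ofReal κ⁻¹ * ∫⁻ x, f x ^ p := by
  set v := volume (ball (0 : E) 1)
  have hvtop : v ≠ ∞ := measure_ball_lt_top.ne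
  set D := ENNReal.ofReal (3 * R * 4 ^ Module.finrank ℝ E) * v
  set C := ENNReal.ofReal p * ((2 * v) ^ (p - 1) * ENNReal.ofReal (p - 1)⁻¹) * (D * 2)
  have hC : C ≠ ∞ := by
    have : (2 * v) ^ (p - 1) ≠ ∞ := ENNReal.rpow_ne_top_of_nonneg (by linarith) (by finiteness)
    finiteness
  refine ⟨C.toNNReal, fun y κ f M hy hκ hκR hf hM => ?_⟩
  have hfinite : ∀ x, ballMaximal f y κ x ≠ ∞ := fun x => by
    refine ne_top_of_le_ne_top ?_ (ballMaximal_le_add (g := 0) (a := M) (by simpa using hM) y κ x)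
    have hzero : ballMaximal 0 y κ x = 0 := by simp [ballMaximal]
    rw [hzero]
    finiteness
  refine (lintegral_rpow_le_of_weak_type hf.measurable
    ((measurable_ballMaximal hf).comp (by fun_prop : Measurable fun x : E => (x, y, κ)))
    (fun x => ne_top_of_le_ne_top ENNReal.coe_ne_top (hM x)) hfinite
    (A := D * ENNReal.ofReal κ⁻¹ * 2) (b := 2 * v) (by finiteness) hp
    fun s hs => volume_lt_ballMaximal_le_setLIntegral hy hκ hκR hf.measurable hs).trans_eq ?_
  rw [ENNReal.coe_toNNReal hC]
  ring

end BallMaximal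

section DilationMaximal

/-- The maximal operator `sup_{t > 0} ∫ f (x - t y) dμ(y)` over the dilates of a measure `μ`. -/
def dilationMaximal {E : Type*} [AddCommGroup E] [Module ℝ E] [MeasurableSpace E]
    (μ : Measure E) (f : E → ℝ≥0∞) (x : E) : ℝ≥0∞ :=
  ⨆ t ∈ Ioi (0 : ℝ), ∫⁻ y, f (x - t • y) ∂μ

theorem measurable_dilationMaximal {E : Type*} [NormedAddCommGroup E] [NormedSpace ℝ E]
    [MeasurableSpace E] [BorelSpace E] (μ : Measure E) {f : E → ℝ≥0∞} (hf : Continuous f) :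
    Measurable (dilationMaximal μ f) := by
  refine LowerSemicontinuous.measurable (lowerSemicontinuous_biSup fun t _ => ?_)
  exact lowerSemicontinuous_lintegral
    (fun x => (hf.comp (by fun_prop : Continuous fun y => x - t • y)).measurable)
    (fun y => hf.comp (by fun_prop))

variable {E : Type*} [NormedAddCommGroup E] [NormedSpace ℝ E] [MeasureSpace E]

theorem dilationMaximal_le_lintegral_ballMaximal {μ : Measure E} {m : Measure (E × ℝ)}
    {f : E → ℝ≥0∞} (hdom : ∀ t : ℝ, ∀ x, ∫⁻ y, f (x - t • y) ∂μ ≤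
      ∫⁻ q, (∫⁻ b in ball (0 : E) 1, f (x - t • (q.1 + q.2 • b))) ∂m) (x : E) :
    dilationMaximal μ f x ≤ ∫⁻ q, ballMaximal f q.1 q.2 x ∂m :=
  iSup₂_le fun t ht => (hdom t x).trans <| lintegral_mono fun q =>
    le_iSup₂ (f := fun t _ => ∫⁻ b in ball (0 : E) 1, f (x - t • (q.1 + q.2 • b))) t ht

/-- `μ` is bounded by a superposition `∫ (κ^{-d} 1_{B(y, κ)}) dm(y, κ)` of normalized balls with
bounded centers and radii, such that `∫ κ^{-1/p} dm < ∞` for all `p > 1`. The weight `κ^{-1/p}` is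
the growth of the `L^p` norm of the maximal operator over dilates of a ball of radius `κ`. -/
def DominatedByBallAverages (μ : Measure E) : Prop :=
  ∃ (R : ℝ) (m : Measure (E × ℝ)), SFinite m ∧
    (∀ᵐ q ∂m, ‖q.1‖ ≤ R ∧ 0 < q.2 ∧ q.2 ≤ R) ∧
    (∀ p : ℝ, 1 < p → ∫⁻ q, ENNReal.ofReal (q.2 ^ (-1 / p)) ∂m ≠ ∞) ∧
    ∀ F : E → ℝ≥0∞, Measurable F →
      ∫⁻ y, F y ∂μ ≤ ∫⁻ q, (∫⁻ b in ball (0 : E) 1, F (q.1 + q.2 • b)) ∂m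

namespace DominatedByBallAverages

variable {μ ν : Measure E}

theorem mono (hν : DominatedByBallAverages ν) (h : μ ≤ ν) : DominatedByBallAverages μ := by
  obtain ⟨R, m, hm, hsupp, hweight, hdom⟩ := hν
  exact ⟨R, m, hm, hsupp, hweight, fun F hF => (lintegral_mono' h le_rfl).trans (hdom F hF)⟩

theorem zero : DominatedByBallAverages (0 : Measure E) :=
  ⟨0, 0, inferInstance, by simp, by simp, by simp⟩

theorem smul (hμ : DominatedByBallAverages μ) (c : ℝ≥0) : DominatedByBallAverages (c • μ) := by
  obtain ⟨R, m, hm, hsupp, hweight, hdom⟩ := hμ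
  refine ⟨R, c • m, inferInstance, Measure.ae_smul_measure hsupp c, fun p hp => ?_, fun F hF => ?_⟩
  · rw [lintegral_smul_measure]
    exact ENNReal.mul_ne_top ENNReal.coe_ne_top (hweight p hp)
  · rw [lintegral_smul_measure, lintegral_smul_measure]
    exact mul_le_mul_right (hdom F hF) _

theorem add (hμ : DominatedByBallAverages μ) (hν : DominatedByBallAverages ν) :
    DominatedByBallAverages (μ + ν) := by
  obtain ⟨R, m, hm, hsupp, hweight, hdom⟩ := hμ
  obtain ⟨R', m', hm', hsupp', hweight', hdom'⟩ := hν
  refine ⟨max R R', m + m', inferInstance, ?_, fun p hp => ?_, fun F hF => ?_⟩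
  · rw [ae_add_measure_iff]
    constructor
    · filter_upwards [hsupp] with q ⟨hy, hpos, hκ⟩
      exact ⟨hy.trans (le_max_left _ _), hpos, hκ.trans (le_max_left _ _)⟩
    · filter_upwards [hsupp'] with q ⟨hy, hpos, hκ⟩
      exact ⟨hy.trans (le_max_right _ _), hpos, hκ.trans (le_max_right _ _)⟩
  · rw [lintegral_add_measure]
    exact ENNReal.add_ne_top.2 ⟨hweight p hp, hweight' p hp⟩
  · rw [lintegral_add_measure, lintegral_add_measure]
    exact add_le_add (hdom F hF) (hdom' F hF)

variable [FiniteDimensional ℝ E] [(volume : Measure E).IsAddHaarMeasure]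

theorem isFiniteMeasure (hμ : DominatedByBallAverages μ) : IsFiniteMeasure μ := by
  obtain ⟨R, m, _, hsupp, hweight, hdom⟩ := hμ
  have hm_univ : m univ ≠ ∞ := by
    refine ne_top_of_le_ne_top (ENNReal.mul_ne_top (ENNReal.ofReal_ne_top (r := R ^ (1 / 2 : ℝ)))
      (hweight 2 one_lt_two)) ?_
    rw [← lintegral_one, ← lintegral_const_mul _ (by fun_prop)]
    refine lintegral_mono_ae ?_
    filter_upwards [hsupp] with q ⟨_, hκ, hκR⟩
    rw [← ENNReal.ofReal_mul (by have := hκ.trans_le hκR; positivity), ENNReal.one_le_ofReal,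
      neg_div, Real.rpow_neg hκ.le, ← div_eq_mul_inv, one_le_div (by positivity)]
    gcongr
  refine ⟨lt_of_le_of_lt ?_ (ENNReal.mul_lt_top (measure_ball_lt_top (μ := volume) (x := (0 : E))
    (r := 1)) hm_univ.lt_top)⟩
  simpa using hdom (fun _ => 1) measurable_const

variable [BorelSpace E] [Nontrivial E]

theorem exists_lintegral_dilationMaximal_rpow_le (hμ : DominatedByBallAverages μ) {p : ℝ}
    (hp : 1 < p) :
    ∃ C : ℝ≥0, ∀ (f : E → ℝ≥0∞) (M : ℝ≥0), Continuous f → (∀ x, f x ≤ M) →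
      ∫⁻ x, dilationMaximal μ f x ^ p ≤ C * ∫⁻ x, f x ^ p := by
  obtain ⟨R, m, hm, hsupp, hweight, hdom⟩ := hμ
  obtain ⟨C, hC⟩ := exists_lintegral_ballMaximal_rpow_le E R hp
  lift (∫⁻ q, ENNReal.ofReal (q.2 ^ (-1 / p)) ∂m) to ℝ≥0 using hweight p hp with W hW
  have hp0 : 0 < p := by linarith
  refine ⟨W ^ p * C, fun f M hf hM => ?_⟩
  have hball : ∀ᵐ q ∂m, ∫⁻ x, ballMaximal f q.1 q.2 x ^ p ≤
      ENNReal.ofReal (q.2 ^ (-1 / p)) ^ p * (C * ∫⁻ x, f x ^ p) := by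
    filter_upwards [hsupp] with q ⟨hy, hκ, hκR⟩
    refine (hC q.1 q.2 f M hy hκ hκR hf hM).trans_eq ?_
    rw [ENNReal.ofReal_rpow_of_nonneg (by positivity) hp0.le, ← Real.rpow_mul hκ.le,
      div_mul_cancel₀ _ hp0.ne', Real.rpow_neg_one]
    ring
  calc ∫⁻ x, dilationMaximal μ f x ^ p
      ≤ ∫⁻ x, (∫⁻ q, ballMaximal f q.1 q.2 x ∂m) ^ p := by
        gcongr with x
        exact dilationMaximal_le_lintegral_ballMaximal
          (fun t x => hdom _ (hf.measurable.comp (by fun_prop))) x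
    _ ≤ (∫⁻ q, ENNReal.ofReal (q.2 ^ (-1 / p)) ∂m) ^ p * (C * ∫⁻ x, f x ^ p) := by
        refine lintegral_rpow_lintegral_le_of_weight (measurable_ballMaximal hf) (by fun_prop) ?_
          (.of_forall fun _ => ENNReal.ofReal_ne_top) hp hball
        filter_upwards [hsupp] with q ⟨_, hκ, _⟩
        simpa using Real.rpow_pos_of_pos hκ _
    _ = _ := by
        rw [← hW, ENNReal.coe_mul, ENNReal.coe_rpow_of_nonneg _ hp0.le, mul_assoc]

end DominatedByBallAverages

theorem enorm_le_eLpNorm_top {X ε : Type*} [TopologicalSpace X] [MeasurableSpace X]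
    [TopologicalSpace ε] [ContinuousENorm ε] {μ : Measure X} [μ.IsOpenPosMeasure] {f : X → ε}
    (hf : Continuous f) (x : X) : ‖f x‖ₑ ≤ eLpNorm f ∞ μ := by
  have hdense : Dense {y | ‖f y‖ₑ ≤ eLpNorm f ∞ μ} := by
    rw [eLpNorm_exponent_top]
    exact Measure.dense_of_ae (enorm_ae_le_eLpNormEssSup f μ)
  exact (isClosed_le (by fun_prop) continuous_const).closure_subset (hdense x)

namespace DominatedByBallAverages

variable {μ : Measure E} [FiniteDimensional ℝ E] [BorelSpace E]
  [(volume : Measure E).IsAddHaarMeasure] [Nontrivial E]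

theorem exists_eLpNorm_dilationMaximal_le (hμ : DominatedByBallAverages μ) {p : ℝ≥0∞}
    (hp : 1 < p) :
    ∃ C : ℝ≥0, ∀ (f : E → ℝ≥0∞) (M : ℝ≥0), Continuous f → (∀ x, f x ≤ M) →
      eLpNorm (dilationMaximal μ f) p volume ≤ C * eLpNorm f p volume := by
  have hp0 : p ≠ 0 := (zero_lt_one.trans hp).ne'
  rcases eq_or_ne p ∞ with rfl | hp_top
  · have := hμ.isFiniteMeasure
    refine ⟨(μ univ).toNNReal, fun f M hf _ => ?_⟩
    rw [ENNReal.coe_toNNReal (measure_ne_top μ _), eLpNorm_exponent_top (f := dilationMaximal μ f)]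
    refine eLpNormEssSup_le_of_ae_enorm_bound (.of_forall fun x => iSup₂_le fun t _ => ?_)
    calc ∫⁻ y, f (x - t • y) ∂μ ≤ ∫⁻ _, eLpNorm f ∞ volume ∂μ :=
          lintegral_mono fun y => enorm_le_eLpNorm_top hf _
      _ = _ := by rw [lintegral_const, mul_comm]
  · have hp1 : 1 < p.toReal := by
      rw [← ENNReal.toReal_one]
      exact (ENNReal.toReal_lt_toReal ENNReal.one_ne_top hp_top).2 hp
    obtain ⟨C, hC⟩ := hμ.exists_lintegral_dilationMaximal_rpow_le hp1
    have hinv : 0 ≤ 1 / p.toReal := by positivity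
    refine ⟨C ^ (1 / p.toReal), fun f M hf hM => ?_⟩
    simp only [eLpNorm_eq_lintegral_rpow_enorm_toReal hp0 hp_top, enorm_eq_self,
      ENNReal.coe_rpow_of_nonneg _ hinv, ← ENNReal.mul_rpow_of_nonneg _ _ hinv]
    exact ENNReal.rpow_le_rpow (hC f M hf hM) hinv

theorem exists_eLpNorm_dilationMaximal_rpow_le (hμ : DominatedByBallAverages μ) {p : ℝ≥0∞} {s : ℝ}
    (hs : 0 < s) (hsp : ENNReal.ofReal s < p) :
    ∃ C : ℝ≥0, ∀ (f : E → ℝ≥0∞) (M : ℝ≥0), Continuous f → (∀ x, f x ≤ M) →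
      eLpNorm (fun x => dilationMaximal μ (fun y => f y ^ s) x ^ (1 / s)) p volume ≤
        C * eLpNorm f p volume := by
  have hs' : 0 < 1 / s := by positivity
  have hps : 1 < p * ENNReal.ofReal (1 / s) := by
    rw [one_div, ENNReal.ofReal_inv_of_pos hs, ← div_eq_mul_inv,
      ENNReal.lt_div_iff_mul_lt (by simp [hs]) (by simp), one_mul]
    exact hsp
  have hmul : p * ENNReal.ofReal (1 / s) * ENNReal.ofReal s = p := by
    rw [mul_assoc, ← ENNReal.ofReal_mul hs'.le, one_div_mul_cancel hs.ne', ENNReal.ofReal_one,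
      mul_one]
  obtain ⟨C, hC⟩ := hμ.exists_eLpNorm_dilationMaximal_le hps
  refine ⟨C ^ (1 / s), fun f M hf hM => ?_⟩
  have hmain := hC (fun y => f y ^ s) (M ^ s) (ENNReal.continuous_rpow_const.comp hf) fun x => by
    rw [ENNReal.coe_rpow_of_nonneg _ hs.le]
    exact ENNReal.rpow_le_rpow (hM x) hs.le
  calc eLpNorm (fun x => dilationMaximal μ (fun y => f y ^ s) x ^ (1 / s)) p volume
      = eLpNorm (dilationMaximal μ fun y => f y ^ s) (p * ENNReal.ofReal (1 / s)) volume
          ^ (1 / s) := eLpNorm_enorm_rpow (dilationMaximal μ fun y => f y ^ s) hs'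
    _ ≤ (C * eLpNorm (fun y => f y ^ s) (p * ENNReal.ofReal (1 / s)) volume) ^ (1 / s) := by gcongr
    _ = (C * eLpNorm f p volume ^ s) ^ (1 / s) := by
        have hpow := eLpNorm_enorm_rpow (p := p * ENNReal.ofReal (1 / s)) (μ := volume) f hs
        rw [hmul] at hpow
        rw [← hpow]
        rfl
    _ = _ := by
        rw [ENNReal.mul_rpow_of_nonneg _ _ hs'.le, ← ENNReal.rpow_mul, mul_one_div_cancel hs.ne',
          ENNReal.rpow_one, ENNReal.coe_rpow_of_nonneg _ hs'.le]

end DominatedByBallAverages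

end DilationMaximal

section BilinearMaximal

theorem exists_holderConjugate_ofReal_lt {p q r : ℝ≥0∞} (hp : 1 < p) (hq : 1 < q) (hr : 1 < r)
    (hpqr : p⁻¹ + q⁻¹ = r⁻¹) :
    ∃ s s' : ℝ, s.HolderConjugate s' ∧ ENNReal.ofReal s < p ∧ ENNReal.ofReal s' < q := by
  have hinv_ne_top {a : ℝ≥0∞} (ha : 1 < a) : a⁻¹ ≠ ∞ :=
    ENNReal.inv_ne_top.2 (zero_lt_one.trans ha).ne'
  have hr1 : (r⁻¹).toReal < 1 := by
    rw [← ENNReal.toReal_one]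
    exact (ENNReal.toReal_lt_toReal (hinv_ne_top hr) ENNReal.one_ne_top).2 (ENNReal.inv_lt_one.2 hr)
  have hadd : (p⁻¹).toReal + (q⁻¹).toReal = (r⁻¹).toReal := by
    rw [← ENNReal.toReal_add (hinv_ne_top hp) (hinv_ne_top hq), hpqr]
  set θ : ℝ := (1 - (r⁻¹).toReal) / 2 with hθ
  have hθ0 : 0 < θ := by linarith
  have hlt {a : ℝ≥0∞} (ha : 1 < a) : ENNReal.ofReal ((a⁻¹).toReal + θ)⁻¹ < a := by
    rw [ENNReal.ofReal_inv_of_pos (by positivity), ENNReal.inv_lt_iff_inv_lt,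
      ENNReal.lt_ofReal_iff_toReal_lt (hinv_ne_top ha)]
    linarith
  refine ⟨((p⁻¹).toReal + θ)⁻¹, ((q⁻¹).toReal + θ)⁻¹, ?_, hlt hp, hlt hq⟩
  rw [Real.holderConjugate_iff, inv_inv, inv_inv]
  exact ⟨(one_lt_inv₀ (by positivity)).2 (by linarith [ENNReal.toReal_nonneg (a := q⁻¹)]),
    by linarith⟩

theorem eLpNorm_mul_le_of_ne_top {α : Type*} [MeasurableSpace α] {μ : Measure α} {p q r : ℝ≥0∞}
    {F G : α → ℝ≥0∞} (hF : Measurable F) (hG : Measurable G) (hF_top : ∀ x, F x ≠ ∞)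
    (hG_top : ∀ x, G x ≠ ∞) (hpqr : p⁻¹ + q⁻¹ = r⁻¹) :
    eLpNorm (fun x => F x * G x) r μ ≤ eLpNorm F p μ * eLpNorm G q μ := by
  have : ENNReal.HolderTriple p q r := ⟨hpqr⟩
  have h := eLpNorm_le_eLpNorm_mul_eLpNorm_of_nnnorm (p := p) (q := q) (r := r) (μ := μ)
    hF.ennreal_toReal.aestronglyMeasurable hG.ennreal_toReal.aestronglyMeasurable (· * ·) 1
    (.of_forall fun x => by simp)
  have hcongr {H : α → ℝ≥0∞} (hH : ∀ x, H x ≠ ∞) (s : ℝ≥0∞) :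
      eLpNorm (fun x => (H x).toReal) s μ = eLpNorm H s μ :=
    eLpNorm_congr_enorm_ae (.of_forall fun x => by simp [hH x])
  simp only [← ENNReal.toReal_mul] at h
  rwa [hcongr hF_top, hcongr hG_top, hcongr fun x => ENNReal.mul_ne_top (hF_top x) (hG_top x),
    ENNReal.coe_one, one_mul] at h

theorem dilationMaximal_ne_top {E : Type*} [AddCommGroup E] [Module ℝ E] [MeasurableSpace E]
    {μ : Measure E} [IsFiniteMeasure μ] {f : E → ℝ≥0∞} {M : ℝ≥0} (hM : ∀ x, f x ≤ M) (x : E) :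
    dilationMaximal μ f x ≠ ∞ := by
  refine ne_top_of_le_ne_top (ENNReal.mul_ne_top (ENNReal.coe_ne_top (r := M))
    (measure_ne_top μ univ)) (iSup₂_le fun t _ => ?_)
  rw [← lintegral_const]
  exact lintegral_mono fun y => hM _

/-- The bilinear maximal operator `sup_{t > 0} |∫ f (x - t y) g (x - t z) dσ(y, z)|` of a measure
`σ` on the product space. -/
def bilinearMaximal {E : Type*} [AddCommGroup E] [Module ℝ E] [MeasurableSpace E]
    (σ : Measure (E × E)) (f g : E → ℝ) (x : E) : ℝ≥0∞ :=
  ⨆ t ∈ Ioi (0 : ℝ), ENNReal.ofReal |∫ p, f (x - t • p.1) * g (x - t • p.2) ∂σ|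

variable {E : Type*} [NormedAddCommGroup E] [NormedSpace ℝ E]

theorem bilinearMaximal_le_mul [SecondCountableTopology E] [MeasurableSpace E] [BorelSpace E]
    (σ : Measure (E × E)) {f g : E → ℝ} (hf : Continuous f) (hg : Continuous g) {s s' : ℝ}
    (hs : s.HolderConjugate s') (x : E) :
    bilinearMaximal σ f g x ≤
      dilationMaximal (σ.map Prod.fst) (fun y => ‖f y‖ₑ ^ s) x ^ (1 / s) *
        dilationMaximal (σ.map Prod.snd) (fun z => ‖g z‖ₑ ^ s') x ^ (1 / s') := by
  refine iSup₂_le fun t ht => ?_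
  have hcont {h : E → ℝ} (hh : Continuous h) (a : ℝ) : Continuous fun y => ‖h (x - t • y)‖ₑ ^ a :=
    ENNReal.continuous_rpow_const.comp (by fun_prop)
  calc ENNReal.ofReal |∫ p, f (x - t • p.1) * g (x - t • p.2) ∂σ|
      ≤ ∫⁻ p, ‖f (x - t • p.1)‖ₑ * ‖g (x - t • p.2)‖ₑ ∂σ := by
        rw [← Real.norm_eq_abs, ofReal_norm]
        simpa only [enorm_mul] using enorm_integral_le_lintegral_enorm
          (fun p : E × E => f (x - t • p.1) * g (x - t • p.2))
    _ ≤ (∫⁻ p, ‖f (x - t • p.1)‖ₑ ^ s ∂σ) ^ (1 / s) *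
          (∫⁻ p, ‖g (x - t • p.2)‖ₑ ^ s' ∂σ) ^ (1 / s') :=
        ENNReal.lintegral_mul_le_Lp_mul_Lq σ hs
          (Continuous.aemeasurable (by fun_prop)) (Continuous.aemeasurable (by fun_prop))
    _ = (∫⁻ y, ‖f (x - t • y)‖ₑ ^ s ∂σ.map Prod.fst) ^ (1 / s) *
          (∫⁻ z, ‖g (x - t • z)‖ₑ ^ s' ∂σ.map Prod.snd) ^ (1 / s') := by
        rw [lintegral_map (hcont hf s).measurable measurable_fst,
          lintegral_map (hcont hg s').measurable measurable_snd]
    _ ≤ _ := by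
        have := hs.pos
        have := hs.symm.pos
        gcongr
        · exact le_iSup₂ (f := fun t _ => ∫⁻ y, ‖f (x - t • y)‖ₑ ^ s ∂σ.map Prod.fst) t ht
        · exact le_iSup₂ (f := fun t _ => ∫⁻ z, ‖g (x - t • z)‖ₑ ^ s' ∂σ.map Prod.snd) t ht

theorem exists_eLpNorm_bilinearMaximal_le [FiniteDimensional ℝ E] [Nontrivial E] [MeasureSpace E]
    [BorelSpace E] [(volume : Measure E).IsAddHaarMeasure] {σ : Measure (E × E)}
    (hσ₁ : DominatedByBallAverages (σ.map Prod.fst))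
    (hσ₂ : DominatedByBallAverages (σ.map Prod.snd)) {p q r : ℝ≥0∞} (hp : 1 < p) (hq : 1 < q)
    (hr : 1 < r) (hpqr : p⁻¹ + q⁻¹ = r⁻¹) :
    ∃ C : ℝ≥0, ∀ f g : BoundedContinuousFunction E ℝ,
      eLpNorm (bilinearMaximal σ f g) r volume ≤
        C * eLpNorm f p volume * eLpNorm g q volume := by
  have := secondCountable_of_proper (α := E)
  have := hσ₁.isFiniteMeasure
  have := hσ₂.isFiniteMeasure
  obtain ⟨s, s', hs, hsp, hsq⟩ := exists_holderConjugate_ofReal_lt hp hq hr hpqr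
  obtain ⟨C₁, hC₁⟩ := hσ₁.exists_eLpNorm_dilationMaximal_rpow_le hs.pos hsp
  obtain ⟨C₂, hC₂⟩ := hσ₂.exists_eLpNorm_dilationMaximal_rpow_le hs.symm.pos hsq
  have hbound (h : BoundedContinuousFunction E ℝ) (x : E) : ‖h x‖ₑ ≤ ‖h‖₊ :=
    ENNReal.coe_le_coe.2 (h.nnnorm_coe_le_nnnorm x)
  have hmeas (μ : Measure E) (h : BoundedContinuousFunction E ℝ) (a : ℝ) :
      Measurable fun x => dilationMaximal μ (fun y => ‖h y‖ₑ ^ a) x ^ (1 / a) :=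
    (measurable_dilationMaximal μ (ENNReal.continuous_rpow_const.comp (by fun_prop))).pow_const _
  have hfin (μ : Measure E) [IsFiniteMeasure μ] (h : BoundedContinuousFunction E ℝ) {a : ℝ}
      (ha : 0 < a) (x : E) : dilationMaximal μ (fun y => ‖h y‖ₑ ^ a) x ^ (1 / a) ≠ ∞ := by
    refine ENNReal.rpow_ne_top_of_nonneg (by positivity)
      (dilationMaximal_ne_top (M := ‖h‖₊ ^ a) (fun y => ?_) x)
    rw [ENNReal.coe_rpow_of_nonneg _ ha.le]
    exact ENNReal.rpow_le_rpow (hbound h y) ha.le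
  refine ⟨C₁ * C₂, fun f g => ?_⟩
  calc eLpNorm (bilinearMaximal σ f g) r volume
      ≤ eLpNorm (fun x => dilationMaximal (σ.map Prod.fst) (fun y => ‖f y‖ₑ ^ s) x ^ (1 / s) *
          dilationMaximal (σ.map Prod.snd) (fun z => ‖g z‖ₑ ^ s') x ^ (1 / s')) r volume :=
        eLpNorm_mono_enorm (bilinearMaximal_le_mul σ f.continuous g.continuous hs)
    _ ≤ _ := eLpNorm_mul_le_of_ne_top (hmeas _ f s) (hmeas _ g s') (hfin _ f hs.pos)
        (hfin _ g hs.symm.pos) hpqr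
    _ ≤ (C₁ * eLpNorm (‖f ·‖ₑ) p volume) * (C₂ * eLpNorm (‖g ·‖ₑ) q volume) :=
        mul_le_mul' (hC₁ _ _ (by fun_prop) (hbound f)) (hC₂ _ _ (by fun_prop) (hbound g))
    _ = _ := by
        rw [eLpNorm_enorm, eLpNorm_enorm, ENNReal.coe_mul]
        ring

theorem lpNormE_eq_eLpNorm {α : Type*} [MeasurableSpace α] (μ : Measure α) (F : α → ℝ≥0∞)
    (r : ℝ≥0∞) : lpNormE μ F r = eLpNorm F r μ := by
  rcases eq_or_ne r 0 with rfl | hr0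
  · simp [lpNormE]
  rcases eq_or_ne r ∞ with rfl | hr
  · simp [lpNormE, eLpNormEssSup]
  · simp [lpNormE, hr0, hr, eLpNorm_eq_lintegral_rpow_enorm_toReal]

end BilinearMaximal

section WhitneyAveraging

theorem lintegral_lintegral_mul_comp_add {H Q : Type*} [AddGroup H] [MeasurableSpace H]
    [MeasurableAdd₂ H] [MeasurableSub₂ H] [MeasurableSpace Q] {ν : Measure H} [SFinite ν]
    [ν.IsAddRightInvariant] {lam : Measure Q} [SFinite lam] {ι : Q → H} (hι : Measurable ι)
    {k : H × Q → ℝ≥0∞} (hk : Measurable k) {G : H → ℝ≥0∞} (hG : Measurable G) :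
    ∫⁻ w, ∫⁻ q, k (w, q) * G (w + ι q) ∂lam ∂ν =
      ∫⁻ w, (∫⁻ q, k (w - ι q, q) ∂lam) * G w ∂ν := by
  have hshear : Measurable fun z : H × Q => k (z.1 - ι z.2, z.2) := hk.comp (by fun_prop)
  calc ∫⁻ w, ∫⁻ q, k (w, q) * G (w + ι q) ∂lam ∂ν
      = ∫⁻ q, ∫⁻ w, k (w, q) * G (w + ι q) ∂ν ∂lam :=
        lintegral_lintegral_swap (hk.mul (hG.comp (by fun_prop))).aemeasurable
    _ = ∫⁻ q, ∫⁻ w, k (w - ι q, q) * G w ∂ν ∂lam := by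
        congr! 2 with q
        rw [← lintegral_add_right_eq_self (fun w => k (w - ι q, q) * G w) (ι q)]
        simp only [add_sub_cancel_right]
    _ = ∫⁻ w, ∫⁻ q, k (w - ι q, q) * G w ∂lam ∂ν :=
        lintegral_lintegral_swap
          ((hshear.comp measurable_swap).mul (hG.comp measurable_snd)).aemeasurable
    _ = _ := by
        congr! 2 with w
        exact lintegral_mul_const _ (hshear.comp measurable_prodMk_left)

/-- `κ` is a positive scale on `V` for which the half-scale ball around each point of `V`, taken in
the directions of `ι`, stays in `V'` and on which `κ` is constant up to a factor `2`. -/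
structure IsWhitneyScale {H Q : Type*} [Sub H] [Norm Q] (ι : Q → H) (V V' : Set H)
    (κ : H → ℝ) : Prop where
  pos : ∀ w ∈ V, 0 < κ w
  sub_mem : ∀ w ∈ V, ∀ q, ‖q‖ < κ w / 2 → w - ι q ∈ V'
  half_le : ∀ w ∈ V, ∀ q, ‖q‖ < κ w / 2 → κ w / 2 ≤ κ (w - ι q)
  le_two_mul : ∀ w ∈ V, ∀ q, ‖q‖ < κ w / 2 → κ (w - ι q) ≤ 2 * κ w

variable {Q : Type*} [NormedAddCommGroup Q] [NormedSpace ℝ Q] [FiniteDimensional ℝ Q]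
  [MeasurableSpace Q] [BorelSpace Q] (lam : Measure Q) [lam.IsAddHaarMeasure]

theorem IsWhitneyScale.le_lintegral_indicator {H : Type*} [Sub H] {ι : Q → H} {V V' : Set H}
    {κ : H → ℝ} (hκ : IsWhitneyScale ι V V' κ) {w : H} (hw : w ∈ V) :
    ENNReal.ofReal (4 ^ Module.finrank ℝ Q)⁻¹ * lam (ball 0 1) ≤
      ∫⁻ q, {z : H × Q | z.1 ∈ V' ∧ ‖z.2‖ < κ z.1}.indicator
        (fun z => ENNReal.ofReal (κ z.1 ^ Module.finrank ℝ Q)⁻¹) (w - ι q, q) ∂lam := by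
  have hpos := hκ.pos w hw
  calc ENNReal.ofReal (4 ^ Module.finrank ℝ Q)⁻¹ * lam (ball 0 1)
      = ENNReal.ofReal ((2 * κ w) ^ Module.finrank ℝ Q)⁻¹ * lam (ball 0 (κ w / 2)) := by
        rw [Measure.addHaar_ball_of_pos lam 0 (half_pos hpos), ← mul_assoc,
          ← ENNReal.ofReal_mul (by positivity), ← inv_pow, ← inv_pow, ← mul_pow]
        rw [show (2 * κ w)⁻¹ * (κ w / 2) = 4⁻¹ by field_simp; norm_num]
    _ = ∫⁻ q in ball 0 (κ w / 2), ENNReal.ofReal ((2 * κ w) ^ Module.finrank ℝ Q)⁻¹ ∂lam := by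
        rw [setLIntegral_const]
    _ ≤ ∫⁻ q in ball 0 (κ w / 2), {z : H × Q | z.1 ∈ V' ∧ ‖z.2‖ < κ z.1}.indicator
          (fun z => ENNReal.ofReal (κ z.1 ^ Module.finrank ℝ Q)⁻¹) (w - ι q, q) ∂lam := by
        refine setLIntegral_mono' measurableSet_ball fun q hq => ?_
        rw [mem_ball_zero_iff] at hq
        have hhalf := hκ.half_le w hw q hq
        have hpos' : 0 < κ (w - ι q) := (half_pos hpos).trans_le hhalf
        rw [indicator_of_mem (show (w - ι q, q) ∈ {z : H × Q | z.1 ∈ V' ∧ ‖z.2‖ < κ z.1} from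
          ⟨hκ.sub_mem w hw q hq, hq.trans_le hhalf⟩)]
        refine ENNReal.ofReal_le_ofReal (inv_anti₀ (by positivity) ?_)
        gcongr
        exact hκ.le_two_mul w hw q hq
    _ ≤ _ := setLIntegral_le_lintegral _ _

theorem exists_setLIntegral_le_lintegral_average {H : Type*} [NormedAddCommGroup H]
    [NormedSpace ℝ H] [FiniteDimensional ℝ H] [MeasurableSpace H] [BorelSpace H] (ν : Measure H)
    [ν.IsAddHaarMeasure] :
    ∃ C : ℝ≥0, ∀ (ι : Q →L[ℝ] H) (V V' : Set H) (κ : H → ℝ), MeasurableSet V → MeasurableSet V' →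
      Measurable κ → IsWhitneyScale ι V V' κ → ∀ G : H → ℝ≥0∞, Measurable G →
      ∫⁻ w in V, G w ∂ν ≤ C * ∫⁻ w in V', ENNReal.ofReal (κ w ^ Module.finrank ℝ Q)⁻¹ *
        (∫⁻ q in ball 0 (κ w), G (w + ι q) ∂lam) ∂ν := by
  set c : ℝ≥0∞ := ENNReal.ofReal (4 ^ Module.finrank ℝ Q)⁻¹ * lam (ball 0 1)
  have hc0 : c ≠ 0 := mul_ne_zero (by simp) (measure_ball_pos lam 0 one_pos).ne'
  have hc_top : c ≠ ∞ := ENNReal.mul_ne_top ENNReal.ofReal_ne_top measure_ball_lt_top.ne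
  refine ⟨c⁻¹.toNNReal, fun ι V V' κ hV hV' hκm hκ G hG => ?_⟩
  set k : H × Q → ℝ≥0∞ := {z : H × Q | z.1 ∈ V' ∧ ‖z.2‖ < κ z.1}.indicator
    (fun z => ENNReal.ofReal (κ z.1 ^ Module.finrank ℝ Q)⁻¹) with hk
  have hkm : Measurable k := (by fun_prop : Measurable fun z : H × Q =>
    ENNReal.ofReal (κ z.1 ^ Module.finrank ℝ Q)⁻¹).indicator
    ((measurable_fst hV').inter (measurableSet_lt (f := fun z : H × Q => ‖z.2‖)
      (g := fun z : H × Q => κ z.1) (by fun_prop) (by fun_prop)))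
  rw [ENNReal.coe_toNNReal (ENNReal.inv_ne_top.2 hc0), ← ENNReal.div_eq_inv_mul,
    ENNReal.le_div_iff_mul_le (Or.inl hc0) (Or.inl hc_top)]
  calc (∫⁻ w in V, G w ∂ν) * c = ∫⁻ w in V, c * G w ∂ν := by
        rw [lintegral_const_mul _ hG, mul_comm]
    _ ≤ ∫⁻ w in V, (∫⁻ q, k (w - ι q, q) ∂lam) * G w ∂ν :=
        setLIntegral_mono' hV fun w hw => mul_le_mul_left (hκ.le_lintegral_indicator lam hw) _
    _ ≤ ∫⁻ w, (∫⁻ q, k (w - ι q, q) ∂lam) * G w ∂ν := setLIntegral_le_lintegral _ _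
    _ = ∫⁻ w, ∫⁻ q, k (w, q) * G (w + ι q) ∂lam ∂ν :=
        (lintegral_lintegral_mul_comp_add ι.measurable hkm hG).symm
    _ = _ := by
        rw [← lintegral_indicator hV']
        congr! 2 with w
        by_cases hw : w ∈ V'
        · rw [indicator_of_mem hw,
            ← lintegral_const_mul _ (f := fun q => G (w + ι q)) (by fun_prop),
            ← lintegral_indicator measurableSet_ball]
          congr! 2 with q
          by_cases hq : ‖q‖ < κ w <;> simp [hk, indicator, hw, hq]
        · simp [hk, indicator, hw]

end WhitneyAveraging

theorem inv_pow_mul_setLIntegral_ball_mul {E : Type*} [NormedAddCommGroup E] [NormedSpace ℝ E]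
    [FiniteDimensional ℝ E] [MeasureSpace E] [BorelSpace E]
    [(volume : Measure E).IsAddHaarMeasure] (F : E → ℝ≥0∞) (c : E) {L κ : ℝ} (hL : 0 < L)
    (hκ : 0 < κ) :
    ENNReal.ofReal (κ ^ Module.finrank ℝ E)⁻¹ * ∫⁻ y in ball c (L * κ), F y =
      ENNReal.ofReal (L ^ Module.finrank ℝ E) * ∫⁻ b in ball 0 1, F (c + (L * κ) • b) := by
  have hball := setLIntegral_ball_abs F c (mul_pos hL hκ).ne'
  rw [abs_of_pos (mul_pos hL hκ)] at hball
  rw [hball, ← mul_assoc, ← ENNReal.ofReal_mul (by positivity), mul_pow, mul_comm (L ^ _),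
    inv_mul_cancel_left₀ (by positivity)]

namespace DominatedByBallAverages

variable {E : Type*} [NormedAddCommGroup E] [NormedSpace ℝ E] [MeasureSpace E] [BorelSpace E]
  [FiniteDimensional ℝ E] [(volume : Measure E).IsAddHaarMeasure]

theorem of_param {α : Type*} [MeasurableSpace α] {ν : Measure α} [SFinite ν] {μ : Measure E}
    {Y : α → E} {κ : α → ℝ} {ρ : α → ℝ≥0∞} (hY : Measurable Y) (hκ : Measurable κ)
    (hρ : Measurable ρ) {R : ℝ} (hbdd : ∀ᵐ w ∂ν, ‖Y w‖ ≤ R ∧ 0 < κ w ∧ κ w ≤ R)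
    (hweight : ∀ p : ℝ, 1 < p → ∫⁻ w, ρ w * ENNReal.ofReal (κ w ^ (-1 / p)) ∂ν ≠ ∞)
    (hdom : ∀ F : E → ℝ≥0∞, Measurable F →
      ∫⁻ y, F y ∂μ ≤ ∫⁻ w, ρ w * (∫⁻ b in ball (0 : E) 1, F (Y w + κ w • b)) ∂ν) :
    DominatedByBallAverages μ := by
  have hYκ : Measurable fun w => (Y w, κ w) := hY.prodMk hκ
  refine ⟨R, (ν.withDensity ρ).map fun w => (Y w, κ w), inferInstance, ?_, fun p hp => ?_,
    fun F hF => ?_⟩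
  · refine (ae_map_iff hYκ.aemeasurable ?_).2 ((withDensity_absolutelyContinuous _ _).ae_le hbdd)
    exact (measurableSet_le (f := fun q : E × ℝ => ‖q.1‖) (by fun_prop) measurable_const).inter
      ((measurableSet_lt measurable_const measurable_snd).inter
        (measurableSet_le measurable_snd measurable_const))
  · rw [lintegral_map (by fun_prop) hYκ,
      lintegral_withDensity_eq_lintegral_mul _ hρ (by fun_prop)]
    exact hweight p hp
  · have hFm : Measurable fun q : E × ℝ => ∫⁻ b in ball (0 : E) 1, F (q.1 + q.2 • b) :=
      Measurable.lintegral_prod_right' (f := fun z : (E × ℝ) × E => F (z.1.1 + z.1.2 • z.2))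
        (hF.comp (by fun_prop))
    rw [lintegral_map hFm hYκ, 
      lintegral_withDensity_eq_lintegral_mul _ hρ
        (g := fun w => ∫⁻ b in ball (0 : E) 1, F (Y w + κ w • b)) (hFm.comp hYκ)]
    exact hdom F hF

theorem of_isWhitneyScale {H : Type*} [NormedAddCommGroup H] [NormedSpace ℝ H]
    [FiniteDimensional ℝ H] [MeasurableSpace H] [BorelSpace H] {ν : Measure H}
    [ν.IsAddHaarMeasure] {ι : E →L[ℝ] H} {V V' : Set H} {κ : H → ℝ} {ρ : H → ℝ≥0∞} {Y : H → E}
    {L R : ℝ} (hV : MeasurableSet V) (hV' : MeasurableSet V') (hκm : Measurable κ)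
    (hρ : Measurable ρ) (hY : Measurable Y) (hL : 0 < L) (hκ : IsWhitneyScale ι V V' κ)
    (hbdd : ∀ w ∈ V', ‖Y w‖ ≤ R ∧ 0 < κ w ∧ κ w ≤ R)
    (hloc : ∀ w ∈ V', ∀ F : E → ℝ≥0∞, Measurable F →
      ∫⁻ q in ball 0 (κ w), F (Y (w + ι q)) ≤ ρ w * ∫⁻ y in ball (Y w) (L * κ w), F y)
    (hweight : ∀ p : ℝ, 1 < p → ∫⁻ w in V', ρ w * ENNReal.ofReal (κ w ^ (-1 / p)) ∂ν ≠ ∞) :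
    DominatedByBallAverages ((ν.restrict V).map Y) := by
  obtain ⟨C, hC⟩ := exists_setLIntegral_le_lintegral_average (volume : Measure E) ν
  set D : ℝ≥0∞ := C * ENNReal.ofReal (L ^ Module.finrank ℝ E) with hD
  have hD_top : D ≠ ∞ := ENNReal.mul_ne_top ENNReal.coe_ne_top ENNReal.ofReal_ne_top
  refine of_param (ν := ν.restrict V') (κ := fun w => L * κ w) (ρ := fun w => D * ρ w)
    (R := max R (L * R)) hY (by fun_prop) (by fun_prop) ?_ (fun p hp => ?_) (fun F hF => ?_)
  · refine (ae_restrict_iff' hV').2 (.of_forall fun w hw => ?_)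
    obtain ⟨hYR, hκ0, hκR⟩ := hbdd w hw
    exact ⟨le_max_of_le_left hYR, mul_pos hL hκ0, le_max_of_le_right (by gcongr)⟩
  · have hscale : ∀ w ∈ V', D * ρ w * ENNReal.ofReal ((L * κ w) ^ (-1 / p)) =
        D * ENNReal.ofReal (L ^ (-1 / p)) * (ρ w * ENNReal.ofReal (κ w ^ (-1 / p))) := by
      intro w hw
      rw [Real.mul_rpow hL.le (hbdd w hw).2.1.le, ENNReal.ofReal_mul (by positivity)]
      ring
    rw [setLIntegral_congr_fun hV' hscale, lintegral_const_mul _ (by fun_prop)]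
    exact ENNReal.mul_ne_top (ENNReal.mul_ne_top hD_top ENNReal.ofReal_ne_top) (hweight p hp)
  · rw [lintegral_map hF hY]
    refine (hC ι V V' κ hV hV' hκm hκ _ (hF.comp hY)).trans ?_
    rw [← lintegral_const_mul' _ _ ENNReal.coe_ne_top]
    refine setLIntegral_mono' hV' fun w hw => ?_
    have hκ0 := (hbdd w hw).2.1
    calc C * (ENNReal.ofReal (κ w ^ Module.finrank ℝ E)⁻¹ *
          ∫⁻ q in ball 0 (κ w), F (Y (w + ι q)))
        ≤ C * (ENNReal.ofReal (κ w ^ Module.finrank ℝ E)⁻¹ *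
          (ρ w * ∫⁻ y in ball (Y w) (L * κ w), F y)) := by
          gcongr
          exact hloc w hw F hF
      _ = C * ρ w * (ENNReal.ofReal (κ w ^ Module.finrank ℝ E)⁻¹ *
          ∫⁻ y in ball (Y w) (L * κ w), F y) := by ring
      _ = D * ρ w * ∫⁻ b in ball 0 1, F (Y w + (L * κ w) • b) := by
          rw [inv_pow_mul_setLIntegral_ball_mul F (Y w) hL hκ0, hD]
          ring

end DominatedByBallAverages

section PowerWeights

theorem lintegral_Icc_abs_rpow_ne_top {c : ℝ} (hc : c < 1) :
    ∫⁻ x in Icc (-1 : ℝ) 1, ENNReal.ofReal |x| ^ (-c) ≠ ∞ := by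
  have hpos : ∫⁻ x in Ioc (0 : ℝ) 1, ENNReal.ofReal |x| ^ (-c) ≠ ∞ := by
    have hrpow : ∀ x ∈ Ioc (0 : ℝ) 1, ENNReal.ofReal |x| ^ (-c) = ENNReal.ofReal (x ^ (-c)) :=
      fun x hx => by rw [abs_of_pos hx.1, ENNReal.ofReal_rpow_of_pos hx.1]
    rw [setLIntegral_congr_fun measurableSet_Ioc hrpow,
      lintegral_Ioc_rpow zero_le_one (by linarith)]
    exact ENNReal.ofReal_ne_top
  have hneg : ∫⁻ x in Ico (-1 : ℝ) 0, ENNReal.ofReal |x| ^ (-c) =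
      ∫⁻ x in Ioc (0 : ℝ) 1, ENNReal.ofReal |x| ^ (-c) := by
    have := (Measure.measurePreserving_neg (volume : Measure ℝ)).setLIntegral_comp_preimage_emb
      (MeasurableEquiv.neg ℝ).measurableEmbedding (fun x => ENNReal.ofReal |x| ^ (-c)) (Ico (-1) 0)
    simpa using this.symm
  have hcover : Icc (-1 : ℝ) 1 = Ico (-1) 0 ∪ ({0} ∪ Ioc 0 1) := by
    rw [singleton_union, Ioc_insert_left zero_le_one,
      Ico_union_Icc_eq_Icc (by norm_num) zero_le_one]
  refine ne_top_of_le_ne_top ?_ ((hcover ▸ lintegral_union_le _ _ _).trans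
    (add_le_add_right (lintegral_union_le _ _ _) _))
  simp [hneg, hpos]

theorem lintegral_abs_rpow_prod_ne_top {c : ℝ} (hc : c < 1) :
    ∫⁻ z in Icc (-1 : ℝ) 1 ×ˢ Icc (-1 : ℝ) 1,
      ENNReal.ofReal |z.1| ^ (-c) * ENNReal.ofReal |z.2| ^ (-c) ≠ ∞ := by
  rw [Measure.volume_eq_prod, ← Measure.prod_restrict,
    lintegral_prod_mul (f := fun x => ENNReal.ofReal |x| ^ (-c))
      (g := fun x => ENNReal.ofReal |x| ^ (-c)) (by fun_prop) (by fun_prop)]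
  exact ENNReal.mul_ne_top (lintegral_Icc_abs_rpow_ne_top hc) (lintegral_Icc_abs_rpow_ne_top hc)

end PowerWeights

section Submersion

theorem exists_measure_inter_preimage_le_of_approximatesLinearOn {E : Type*}
    [NormedAddCommGroup E] [NormedSpace ℝ E] [FiniteDimensional ℝ E] [MeasurableSpace E]
    [BorelSpace E] (μ : Measure E) [μ.IsAddHaarMeasure] :
    ∃ δ : ℝ≥0, 0 < δ ∧ ∀ (g : E → E) (s t : Set E),
      ApproximatesLinearOn g (ContinuousLinearMap.id ℝ E) s δ → MapsTo g s t →
      ∀ A, μ (s ∩ g ⁻¹' A) ≤ 2 * μ (A ∩ t) := by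
  have hdet : ((2⁻¹ : ℝ≥0) : ℝ≥0∞) < ENNReal.ofReal |(ContinuousLinearMap.id ℝ E).det| := by
    simp [ContinuousLinearMap.det]
  obtain ⟨δ, hδ, hδ0⟩ :=
    ((mul_le_addHaar_image_of_lt_det μ _ hdet).and self_mem_nhdsWithin).exists
  refine ⟨δ, hδ0, fun g s t hg hst A => ?_⟩
  calc μ (s ∩ g ⁻¹' A) = 2 * (((2⁻¹ : ℝ≥0) : ℝ≥0∞) * μ (s ∩ g ⁻¹' A)) := by
        rw [← mul_assoc]
        simp [ENNReal.mul_inv_cancel]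
    _ ≤ 2 * μ (g '' (s ∩ g ⁻¹' A)) := by
        gcongr
        exact hδ _ g (hg.mono_set inter_subset_left)
    _ ≤ 2 * μ (A ∩ t) := by
        gcongr
        rintro _ ⟨x, ⟨hxs, hxA⟩, rfl⟩
        exact ⟨hxA, hst hxs⟩

variable {H : Type*} [NormedAddCommGroup H] [NormedSpace ℝ H]

theorem isWhitneyScale_const {Q : Type*} [NormedAddCommGroup Q] [NormedSpace ℝ Q] (ι : Q →L[ℝ] H)
    (x : H) (r : ℝ) {k : ℝ} (hk : 0 < k) :
    IsWhitneyScale ι (ball x r) (ball x (r + ‖ι‖ * k)) (fun _ => k) where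
  pos _ _ := hk
  half_le _ _ _ _ := by linarith
  le_two_mul _ _ _ _ := by linarith
  sub_mem w hw q hq := by
    rw [mem_ball] at hw ⊢
    calc dist (w - ι q) x ≤ dist (w - ι q) w + dist w x := dist_triangle _ _ _
      _ ≤ ‖ι‖ * k + dist w x := by
        rw [dist_eq_norm, sub_sub_cancel_left, norm_neg]
        gcongr
        exact ι.le_opNorm_of_le (by linarith)
      _ < r + ‖ι‖ * k := by linarith

theorem comp_add_rightInverse_of_approximatesLinearOn {E : Type*} [NormedAddCommGroup E]
    [NormedSpace ℝ E] {T : H → E} {T' : H →L[ℝ] E} {ι : E →L[ℝ] H} {s : Set H} {c : ℝ≥0}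
    (hT : ApproximatesLinearOn T T' s c) (hι : T'.comp ι = ContinuousLinearMap.id ℝ E) (w : H) :
    ApproximatesLinearOn (fun q => T (w + ι q)) (ContinuousLinearMap.id ℝ E)
      ((fun q => w + ι q) ⁻¹' s) (c * ‖ι‖₊) := by
  intro q hq q' hq'
  have hsub : w + ι q - (w + ι q') = ι (q - q') := by rw [add_sub_add_left_eq_sub, map_sub]
  have hid : T' (ι (q - q')) = q - q' := DFunLike.congr_fun hι _
  calc ‖T (w + ι q) - T (w + ι q') - (q - q')‖ ≤ c * ‖ι (q - q')‖ := by
        simpa only [hsub, hid] using hT _ hq _ hq'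
    _ ≤ c * (‖ι‖ * ‖q - q'‖) := by gcongr; exact ι.le_opNorm _
    _ = ↑(c * ‖ι‖₊) * ‖q - q'‖ := by rw [NNReal.coe_mul, coe_nnnorm, mul_assoc]

variable {E : Type*} [NormedAddCommGroup E] [NormedSpace ℝ E] [FiniteDimensional ℝ E]
  [MeasurableSpace E] [BorelSpace E] (μ : Measure E) [μ.IsAddHaarMeasure]

theorem exists_measure_fiber_inter_preimage_le_of_surjective {T : H → E} {x : H}
    {T' : H →L[ℝ] E} (hT : HasStrictFDerivAt T T' x) (hT' : Function.Surjective T') {t : Set E}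
    (ht : t ∈ nhds (T x)) :
    ∃ ι : E →L[ℝ] H, ∃ k > 0, ∀ w ∈ ball x (k + ‖ι‖ * k), ∀ A,
      μ (ball 0 k ∩ (fun q => T (w + ι q)) ⁻¹' A) ≤ 2 * μ (A ∩ t) := by
  obtain ⟨ι, hι⟩ := T'.exists_rightInverse_of_surjective (LinearMap.range_eq_top.2 hT')
  obtain ⟨δ, hδ, hmeas⟩ := exists_measure_inter_preimage_le_of_approximatesLinearOn μ
  obtain ⟨s, hs, happrox⟩ := hT.approximates_deriv_on_nhds (c := δ / (‖ι‖₊ + 1))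
    (Or.inr (by positivity))
  obtain ⟨r, hr, hball⟩ := Metric.mem_nhds_iff.1
    (Filter.inter_mem hs (hT.continuousAt.preimage_mem_nhds ht))
  set k : ℝ := r / (1 + 2 * ‖ι‖) with hk
  have hk0 : 0 < k := by positivity
  have hkr : k + 2 * (‖ι‖ * k) = r := by rw [hk]; field_simp
  refine ⟨ι, k, hk0, fun w hw A => ?_⟩
  have hmem : ∀ q ∈ ball (0 : E) k, w + ι q ∈ ball x r := fun q hq => by
    have hq := ι.le_opNorm_of_le (mem_ball_zero_iff.1 hq).le
    rw [mem_ball, dist_eq_norm] at hw ⊢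
    rw [add_sub_right_comm]
    linarith [norm_add_le (w - x) (ι q)]
  refine hmeas _ _ t ?_ (fun q hq => (hball (hmem q hq)).2) A
  refine ((comp_add_rightInverse_of_approximatesLinearOn happrox hι w).mono_set
    fun q hq => (hball (hmem q hq)).1).mono_num ?_
  calc δ / (‖ι‖₊ + 1) * ‖ι‖₊ ≤ δ / (‖ι‖₊ + 1) * (‖ι‖₊ + 1) := by gcongr; simp
    _ = δ := div_mul_cancel₀ _ (by positivity)

variable [FiniteDimensional ℝ H] [MeasurableSpace H] [BorelSpace H] (ν : Measure H)
  [ν.IsAddHaarMeasure]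

theorem exists_map_restrict_ball_le_smul_of_surjective {T : H → E} (hTm : Measurable T) {x : H}
    {T' : H →L[ℝ] E} (hT : HasStrictFDerivAt T T' x) (hT' : Function.Surjective T') {t : Set E}
    (ht : t ∈ nhds (T x)) :
    ∃ ε > 0, ∃ K : ℝ≥0, (ν.restrict (ball x ε)).map T ≤ K • μ.restrict t := by
  obtain ⟨ι, k, hk0, hfiber⟩ := exists_measure_fiber_inter_preimage_le_of_surjective μ hT hT' ht
  obtain ⟨C, hC⟩ := exists_setLIntegral_le_lintegral_average μ ν
  set K : ℝ≥0∞ := C * (ENNReal.ofReal (k ^ Module.finrank ℝ E)⁻¹ * 2 *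
    ν (ball x (k + ‖ι‖ * k))) with hK
  have hK_top : K ≠ ∞ := by
    finiteness
  refine ⟨k, hk0, K.toNNReal, Measure.le_iff.2 fun A hA => ?_⟩
  rw [Measure.smul_apply, Measure.restrict_apply hA, ENNReal.smul_def,
    ENNReal.coe_toNNReal hK_top, smul_eq_mul]
  calc ((ν.restrict (ball x k)).map T) A
      = ∫⁻ w in ball x k, (T ⁻¹' A).indicator 1 w ∂ν := by
        rw [lintegral_indicator_one (hTm hA), Measure.map_apply hTm hA]
    _ ≤ C * ∫⁻ w in ball x (k + ‖ι‖ * k), ENNReal.ofReal (k ^ Module.finrank ℝ E)⁻¹ *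
          (∫⁻ q in ball 0 k, (T ⁻¹' A).indicator 1 (w + ι q) ∂μ) ∂ν :=
        hC ι _ _ _ measurableSet_ball measurableSet_ball measurable_const
          (isWhitneyScale_const ι x k hk0) _ (measurable_one.indicator (hTm hA))
    _ ≤ C * ∫⁻ w in ball x (k + ‖ι‖ * k), ENNReal.ofReal (k ^ Module.finrank ℝ E)⁻¹ *
          (2 * μ (A ∩ t)) ∂ν := by
        gcongr C * ?_
        refine setLIntegral_mono' measurableSet_ball fun w hw => ?_
        gcongr
        refine le_trans (le_of_eq ?_) (hfiber w hw A)
        have hA' : MeasurableSet ((fun q => T (w + ι q)) ⁻¹' A) :=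
          (hTm.comp (by fun_prop)) hA
        rw [inter_comm, ← Measure.restrict_apply hA', ← lintegral_indicator_one hA']
        rfl
    _ = K * μ (A ∩ t) := by
        rw [setLIntegral_const, hK]
        ring

theorem exists_lintegral_abs_rpow_mul_abs_rpow_ne_top {T : H → ℝ × ℝ} (hTm : Measurable T) {x : H}
    {T' : H →L[ℝ] ℝ × ℝ} (hT : HasStrictFDerivAt T T' x) (hT' : Function.Surjective T')
    (hx : T x = 0) :
    ∃ ε > 0, (∀ᵐ w ∂ν.restrict (ball x ε), T w ≠ 0) ∧ ∀ c : ℝ, c < 1 →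
      ∫⁻ w in ball x ε,
        ENNReal.ofReal |(T w).1| ^ (-c) * ENNReal.ofReal |(T w).2| ^ (-c) ∂ν ≠ ∞ := by
  have hsquare : Icc (-1 : ℝ) 1 ×ˢ Icc (-1 : ℝ) 1 ∈ nhds (T x) := by
    rw [hx]
    exact prod_mem_nhds (Icc_mem_nhds (by norm_num) one_pos) (Icc_mem_nhds (by norm_num) one_pos)
  obtain ⟨ε, hε, K, hK⟩ :=
    exists_map_restrict_ball_le_smul_of_surjective volume ν hTm hT hT' hsquare
  refine ⟨ε, hε, ?_, fun c hc => ?_⟩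
  · have hae : ∀ᵐ z ∂(ν.restrict (ball x ε)).map T, z ≠ 0 :=
      ((Measure.absolutelyContinuous_of_le_smul hK).trans
        Measure.absolutelyContinuous_restrict).ae_le (Measure.ae_ne volume 0)
    exact (ae_map_iff hTm.aemeasurable (measurableSet_singleton 0).compl).1 hae
  · set G : ℝ × ℝ → ℝ≥0∞ := fun z => ENNReal.ofReal |z.1| ^ (-c) * ENNReal.ofReal |z.2| ^ (-c)
    have hG : Measurable G := by fun_prop
    refine ne_top_of_le_ne_top ?_ ((lintegral_map hG hTm).symm.trans_le (lintegral_mono' hK le_rfl))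
    rw [lintegral_smul_measure]
    exact ENNReal.mul_ne_top ENNReal.coe_ne_top (lintegral_abs_rpow_prod_ne_top hc)

end Submersion

namespace DominatedByBallAverages

variable {E : Type*} [NormedAddCommGroup E] [NormedSpace ℝ E] [MeasureSpace E] [BorelSpace E]
  [FiniteDimensional ℝ E] [(volume : Measure E).IsAddHaarMeasure]

theorem restrict_ball (x : E) {r : ℝ} (hr : 0 < r) :
    DominatedByBallAverages ((volume : Measure E).restrict (ball x r)) := by
  refine of_param (ν := Measure.dirac ()) (Y := fun _ => x) (κ := fun _ => r)
    (ρ := fun _ => ENNReal.ofReal (r ^ Module.finrank ℝ E)) (R := max ‖x‖ r)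
    measurable_const measurable_const measurable_const (.of_forall fun _ => by simp [hr])
    (fun p _ => by simp [ENNReal.mul_eq_top]) fun F _ => ?_
  have hball := setLIntegral_ball_abs F x hr.ne'
  rw [abs_of_pos hr] at hball
  rw [hball, lintegral_dirac]

theorem exists_map_of_surjective {H : Type*} [NormedAddCommGroup H] [NormedSpace ℝ H]
    [FiniteDimensional ℝ H] [MeasurableSpace H] [BorelSpace H] (ν : Measure H)
    [ν.IsAddHaarMeasure] {T : H → E} (hTm : Measurable T) {x : H} {T' : H →L[ℝ] E}
    (hT : HasStrictFDerivAt T T' x) (hT' : Function.Surjective T') :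
    ∃ ε > 0, DominatedByBallAverages ((ν.restrict (ball x ε)).map T) := by
  obtain ⟨ε, hε, K, hK⟩ := exists_map_restrict_ball_le_smul_of_surjective volume ν hTm hT hT'
    (ball_mem_nhds (T x) one_pos)
  exact ⟨ε, hε, ((restrict_ball (T x) one_pos).smul K).mono hK⟩

end DominatedByBallAverages

section Shear

variable {E : Type*} [NormedAddCommGroup E] [NormedSpace ℝ E]

theorem injOn_add_smul_of_fderiv_ne {s : Set E} (hs : Convex ℝ s) {η : E → ℝ} {η' : E → E →L[ℝ] ℝ}
    (hη : ∀ q ∈ s, HasFDerivAt η (η' q) q) {u : E} (hu : ∀ q ∈ s, 1 + η' q u ≠ 0) (c : E) :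
    InjOn (fun q => c + q + η q • u) s := by
  intro q hq q' hq' heq
  set τ : ℝ := η q - η q' with hτ
  have hsub : q' - q = τ • u := by
    have := sub_eq_zero.2 heq
    rw [← sub_eq_zero, ← neg_eq_zero, ← this, hτ]
    module
  by_contra hne
  have hτ0 : τ ≠ 0 := by
    rintro h
    rw [h, zero_smul, sub_eq_zero] at hsub
    exact hne hsub.symm
  have hmem : ∀ t ∈ Icc (0 : ℝ) 1, q + t • (τ • u) ∈ s := fun t ht => by
    rw [← hsub]
    exact hs.add_smul_sub_mem hq hq' ht
  have hline : ∀ t ∈ Icc (0 : ℝ) 1, HasDerivAt (fun t : ℝ => t * τ + η (q + t • (τ • u)))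
      (τ * (1 + η' (q + t • (τ • u)) u)) t := by
    intro t ht
    have hpath : HasDerivAt (fun t : ℝ => q + t • (τ • u)) (τ • u) t := by
      simpa using ((hasDerivAt_id t).smul_const (τ • u)).const_add q
    refine (((hasDerivAt_id t).mul_const τ).add
      ((hη _ (hmem t ht)).comp_hasDerivAt t hpath)).congr_deriv ?_
    rw [map_smul, smul_eq_mul]
    ring
  obtain ⟨t, ht, hzero⟩ := exists_hasDerivAt_eq_zero zero_lt_one
    (fun t ht => (hline t ht).continuousAt.continuousWithinAt)
    (by rw [one_smul, ← hsub, add_sub_cancel, hτ]; simp)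
    (fun t ht => hline t (Ioo_subset_Icc_self ht))
  exact mul_ne_zero hτ0 (hu _ (hmem t (Ioo_subset_Icc_self ht))) hzero

variable [FiniteDimensional ℝ E]

theorem det_id_add_smulRight (f : E →L[ℝ] ℝ) (u : E) :
    (ContinuousLinearMap.id ℝ E + f.smulRight u).det = 1 + f u := by
  rw [ContinuousLinearMap.det]
  exact LinearMap.transvection.det (f : E →ₗ[ℝ] ℝ) u

variable [MeasurableSpace E] [BorelSpace E] (μ : Measure E) [μ.IsAddHaarMeasure]

theorem setLIntegral_comp_le_of_le_abs_det {s t : Set E} (hs : MeasurableSet s) {g : E → E}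
    {g' : E → E →L[ℝ] E} (hg : ∀ x ∈ s, HasFDerivWithinAt g (g' x) s x) (hinj : InjOn g s)
    (hst : MapsTo g s t) {a : ℝ} (ha : 0 < a) (hdet : ∀ x ∈ s, a ≤ |(g' x).det|) (F : E → ℝ≥0∞) :
    ∫⁻ x in s, F (g x) ∂μ ≤ ENNReal.ofReal a⁻¹ * ∫⁻ y in t, F y ∂μ :=
  calc ∫⁻ x in s, F (g x) ∂μ
      ≤ ∫⁻ x in s, ENNReal.ofReal a⁻¹ * (ENNReal.ofReal |(g' x).det| * F (g x)) ∂μ := by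
        refine setLIntegral_mono' hs fun x hx => ?_
        rw [← mul_assoc, ← ENNReal.ofReal_mul (by positivity)]
        refine le_mul_of_one_le_left' (ENNReal.one_le_ofReal.2 ?_)
        rw [inv_mul_eq_div, one_le_div ha]
        exact hdet x hx
    _ = ENNReal.ofReal a⁻¹ * ∫⁻ y in g '' s, F y ∂μ := by
        rw [lintegral_const_mul' _ _ ENNReal.ofReal_ne_top,
          lintegral_image_eq_lintegral_abs_det_fderiv_mul μ hs hg hinj]
    _ ≤ ENNReal.ofReal a⁻¹ * ∫⁻ y in t, F y ∂μ := by
        gcongr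
        exact hst.image_subset

theorem setLIntegral_ball_add_smul_le {η : E → ℝ} {η' : E → E →L[ℝ] ℝ} {κ : ℝ}
    (hη : ∀ q ∈ ball 0 κ, HasFDerivAt η (η' q) q) {u : E} {a : ℝ} (ha : 0 < a)
    (hu : ∀ q ∈ ball 0 κ, a ≤ |1 + η' q u|) {L : ℝ} (hL : ∀ q ∈ ball 0 κ, |η q - η 0| ≤ L * κ)
    (c : E) (F : E → ℝ≥0∞) :
    ∫⁻ q in ball 0 κ, F (c + q + η q • u) ∂μ ≤
      ENNReal.ofReal a⁻¹ * ∫⁻ y in ball (c + η 0 • u) ((1 + L * ‖u‖) * κ), F y ∂μ := by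
  refine setLIntegral_comp_le_of_le_abs_det μ measurableSet_ball
    (g' := fun q => ContinuousLinearMap.id ℝ E + (η' q).smulRight u) (fun q hq => ?_)
    (injOn_add_smul_of_fderiv_ne (convex_ball 0 κ) hη (fun q hq h => ?_) c) (fun q hq => ?_) ha
    (fun q hq => (hu q hq).trans_eq (by rw [det_id_add_smulRight])) F
  · exact (((hasFDerivAt_id q).const_add c).add ((hη q hq).smul_const u)).hasFDerivWithinAt
  · have := hu q hq
    rw [h, abs_zero] at this
    exact absurd this ha.not_ge
  · rw [mem_ball, dist_eq_norm]
    calc ‖c + q + η q • u - (c + η 0 • u)‖ = ‖q + (η q - η 0) • u‖ := by congr 1; module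
      _ ≤ ‖q‖ + |η q - η 0| * ‖u‖ := by
        rw [← Real.norm_eq_abs, ← norm_smul]
        exact norm_add_le _ _
      _ < κ + L * κ * ‖u‖ := by
        refine add_lt_add_of_lt_of_le (mem_ball_zero_iff.1 hq) ?_
        gcongr
        exact hL q hq
      _ = (1 + L * ‖u‖) * κ := by ring

theorem setLIntegral_ball_comp_graph_le {H : Type*} [NormedAddCommGroup H] [NormedSpace ℝ H]
    {π : H →L[ℝ] E} {ι : E →L[ℝ] H} {ℓ : E →L[ℝ] ℝ} {u : E} (hι : ∀ q, π (ι q) = q - ℓ q • u)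
    (hu : ℓ u = 1) {φ : H → ℝ} {w : H} {κ a M : ℝ}
    (hφ : ∀ q ∈ ball 0 κ, DifferentiableAt ℝ φ (w + ι q)) (ha : 0 < a)
    (hφ' : ∀ q ∈ ball 0 κ, a ≤ |fderiv ℝ φ (w + ι q) (ι u)|)
    (hM : ∀ q ∈ ball 0 κ, |φ (w + ι q) - φ w| ≤ M * κ) (F : E → ℝ≥0∞) :
    ∫⁻ q in ball 0 κ, F (π (w + ι q) + φ (w + ι q) • u) ∂μ ≤ ENNReal.ofReal a⁻¹ *
      ∫⁻ y in ball (π w + φ w • u) ((1 + (M + ‖ℓ‖) * ‖u‖) * κ), F y ∂μ := by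
  set η : E → ℝ := fun q => φ (w + ι q) - ℓ q with hη
  have hη0 : η 0 = φ w := by simp [hη]
  have hη' : ∀ q ∈ ball 0 κ, HasFDerivAt η ((fderiv ℝ φ (w + ι q)).comp ι - ℓ) q := fun q hq =>
    ((hφ q hq).hasFDerivAt.comp q (ι.hasFDerivAt.const_add w)).sub ℓ.hasFDerivAt
  have hshear : ∀ q, π (w + ι q) + φ (w + ι q) • u = π w + q + η q • u := fun q => by
    rw [map_add, hι]
    module
  simp_rw [hshear]
  rw [← hη0]
  refine setLIntegral_ball_add_smul_le μ hη' ha (fun q hq => (hφ' q hq).trans_eq ?_)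
    (fun q hq => ?_) (π w) F
  · simp [hu]
  · calc |η q - η 0| = |φ (w + ι q) - φ w - ℓ q| := by rw [hη0, hη, sub_right_comm]
      _ ≤ |φ (w + ι q) - φ w| + |ℓ q| := abs_sub _ _
      _ ≤ M * κ + ‖ℓ‖ * κ :=
        add_le_add (hM q hq) (ℓ.le_opNorm_of_le (mem_ball_zero_iff.1 hq).le)
      _ = (M + ‖ℓ‖) * κ := by ring

end Shear

section DominanceRegion

/-- The set where `A` is nonzero and controls `B` up to the factor `K`. There `|A|` is comparable
to `max |A| |B|`, so that it serves as a Whitney scale and as a lower bound for the Jacobian. -/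
def dominanceRegion {α : Type*} (A B : α → ℝ) (K : ℝ) : Set α :=
  {w | A w ≠ 0 ∧ |B w| ≤ K * |A w|}

theorem measurableSet_dominanceRegion {α : Type*} [MeasurableSpace α] {A B : α → ℝ}
    (hA : Measurable A) (hB : Measurable B) (K : ℝ) : MeasurableSet (dominanceRegion A B K) :=
  (hA (measurableSet_singleton 0).compl).inter
    (measurableSet_le (f := fun w => |B w|) (g := fun w => K * |A w|) (by fun_prop) (by fun_prop))

theorem mem_dominanceRegion_or_of_ne_zero {α : Type*} {A B : α → ℝ} {w : α}
    (hw : (A w, B w) ≠ 0) : w ∈ dominanceRegion A B 1 ∨ w ∈ dominanceRegion B A 1 := by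
  simp only [dominanceRegion, mem_ofPred_eq, one_mul]
  rcases le_total |B w| |A w| with h | h
  · refine .inl ⟨fun hA => hw ?_, h⟩
    rw [hA, abs_zero, abs_nonpos_iff] at h
    simp [hA, h]
  · refine .inr ⟨fun hB => hw ?_, h⟩
    rw [hB, abs_zero, abs_nonpos_iff] at h
    simp [hB, h]

section Perturbation

variable {E H : Type*} [NormedAddCommGroup E] [NormedSpace ℝ E] [NormedAddCommGroup H]
  [NormedSpace ℝ H] {ι : E →L[ℝ] H} {w x : H} {q : E} {a c δ θ : ℝ}

theorem add_mem_ball_of_norm_le {r : ℝ} (hcδ : ‖ι‖ * c ≤ δ / 2) (hδ : 0 ≤ δ) (ha : a ≤ 1)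
    (ha₀ : 0 ≤ a) (hθ : 0 ≤ θ) (hw : w ∈ ball x r) (hq : ‖q‖ ≤ θ * (c * a)) :
    w + ι q ∈ ball x (r + θ * (δ / 2)) := by
  have hιq : ‖ι q‖ ≤ θ * (δ / 2) :=
    calc ‖ι q‖ ≤ ‖ι‖ * (θ * (c * a)) := ι.le_opNorm_of_le hq
      _ = θ * (‖ι‖ * c * a) := by ring
      _ ≤ θ * (δ / 2 * 1) := by gcongr
      _ = θ * (δ / 2) := by ring
  rw [mem_ball, dist_eq_norm] at hw ⊢
  rw [add_sub_right_comm]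
  linarith [norm_add_le (w - x) (ι q)]

theorem abs_sub_le_of_lipschitzOnWith {L : ℝ≥0} {G : H → ℝ} {s : Set H}
    (hG : LipschitzOnWith L G s) (hcL : L * (‖ι‖ * c) ≤ 1 / 2) (ha : 0 ≤ a) (hθ : 0 ≤ θ)
    (hw : w ∈ s) (hwq : w + ι q ∈ s) (hq : ‖q‖ ≤ θ * (c * a)) :
    |G (w + ι q) - G w| ≤ θ * (a / 2) :=
  calc |G (w + ι q) - G w| ≤ L * dist (w + ι q) w := hG.dist_le_mul _ hwq _ hw
    _ ≤ L * (‖ι‖ * (θ * (c * a))) := by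
      rw [dist_self_add_left]
      gcongr
      exact ι.le_opNorm_of_le hq
    _ = θ * (L * (‖ι‖ * c) * a) := by ring
    _ ≤ θ * (1 / 2 * a) := by gcongr
    _ = θ * (a / 2) := by ring

theorem isWhitneyScale_dominanceRegion {A B : H → ℝ} {L : ℝ≥0}
    (hA : LipschitzOnWith L A (ball x δ)) (hB : LipschitzOnWith L B (ball x δ))
    (hA1 : ∀ w ∈ ball x δ, |A w| ≤ 1) (hc : 0 < c) (hcL : L * (‖ι‖ * c) ≤ 1 / 2)
    (hcδ : ‖ι‖ * c ≤ δ / 2) :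
    IsWhitneyScale ι (ball x (δ / 4) ∩ dominanceRegion A B 1)
      (ball x (δ / 2) ∩ dominanceRegion A B 2) (fun w => c * |A w|) := by
  have hδ : 0 ≤ δ := by linarith [mul_nonneg (norm_nonneg ι) hc.le]
  have hstep : ∀ w ∈ ball x (δ / 4), ∀ q, ‖q‖ < c * |A w| / 2 → w - ι q ∈ ball x (δ / 2) ∧
      |A (w - ι q) - A w| ≤ |A w| / 4 ∧ |B (w - ι q) - B w| ≤ |A w| / 4 := by
    intro w hw q hq
    have hwδ : w ∈ ball x δ := ball_subset_ball (by linarith) hw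
    have hq' : ‖-q‖ ≤ 1 / 2 * (c * |A w|) := by rw [norm_neg]; linarith
    have hmem := add_mem_ball_of_norm_le hcδ hδ (hA1 w hwδ) (abs_nonneg _) one_half_pos.le hw hq'
    have hmem' : w + ι (-q) ∈ ball x δ := ball_subset_ball (by linarith) hmem
    have hAq := abs_sub_le_of_lipschitzOnWith hA hcL (abs_nonneg _) one_half_pos.le hwδ hmem' hq'
    have hBq := abs_sub_le_of_lipschitzOnWith hB hcL (abs_nonneg _) one_half_pos.le hwδ hmem' hq'
    rw [map_neg, ← sub_eq_add_neg] at hmem hAq hBq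
    exact ⟨ball_subset_ball (by linarith) hmem, by linarith, by linarith⟩
  refine ⟨fun w hw => mul_pos hc (abs_pos.2 hw.2.1), fun w hw q hq => ?_, fun w hw q hq => ?_,
    fun w hw q hq => ?_⟩ <;> obtain ⟨hmem, hAw, hBw⟩ := hstep w hw.1 q hq <;>
    have hA0 := abs_pos.2 hw.2.1 <;> have hA' := abs_le.1 ((abs_abs_sub_abs_le _ _).trans hAw)
  · have hBA := hw.2.2
    have hB' := abs_le.1 ((abs_abs_sub_abs_le _ _).trans hBw)
    exact ⟨hmem, abs_pos.1 (by linarith), by linarith⟩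
  · nlinarith
  · nlinarith

end Perturbation

theorem ofReal_inv_mul_rpow_le_of_le_two_mul {a b c p : ℝ} (ha : 0 < a) (hc : 0 < c) (hp : 1 < p)
    (hba : b ≤ 2 * a) :
    ENNReal.ofReal (a / 2)⁻¹ * ENNReal.ofReal ((c * a) ^ (-1 / p)) ≤
      ENNReal.ofReal (2 * c ^ (-1 / p) * 2 ^ ((1 + 1 / p) / 2)) *
        (ENNReal.ofReal a ^ (-((1 + 1 / p) / 2)) * ENNReal.ofReal b ^ (-((1 + 1 / p) / 2))) := by
  set e : ℝ := (1 + 1 / p) / 2 with he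
  have he0 : 0 < e := by positivity
  have hb : ENNReal.ofReal ((2 * a) ^ (-e)) ≤ ENNReal.ofReal b ^ (-e) := by
    rw [← ENNReal.ofReal_rpow_of_pos (by positivity), ENNReal.rpow_neg, ENNReal.rpow_neg]
    exact ENNReal.inv_le_inv.2 (ENNReal.rpow_le_rpow (ENNReal.ofReal_le_ofReal hba) he0.le)
  have h2 : (2 : ℝ) ^ e * 2 ^ (-e) = 1 := by rw [← Real.rpow_add two_pos]; simp
  have hsq : a ^ (-e) * a ^ (-e) = a⁻¹ * a ^ (-1 / p) := by
    rw [← Real.rpow_neg_one a, ← Real.rpow_add ha, ← Real.rpow_add ha]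
    congr 1
    rw [he]
    ring
  have hreal : (a / 2)⁻¹ * (c * a) ^ (-1 / p) =
      2 * c ^ (-1 / p) * 2 ^ e * (a ^ (-e) * (2 * a) ^ (-e)) :=
    calc (a / 2)⁻¹ * (c * a) ^ (-1 / p) = 2 * c ^ (-1 / p) * (a⁻¹ * a ^ (-1 / p)) := by
          rw [Real.mul_rpow hc.le ha.le, inv_div]
          ring
      _ = 2 * c ^ (-1 / p) * (2 ^ e * 2 ^ (-e)) * (a ^ (-e) * a ^ (-e)) := by rw [h2, hsq]; ring
      _ = 2 * c ^ (-1 / p) * 2 ^ e * (a ^ (-e) * (2 * a) ^ (-e)) := by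
          rw [Real.mul_rpow two_pos.le ha.le]
          ring
  calc ENNReal.ofReal (a / 2)⁻¹ * ENNReal.ofReal ((c * a) ^ (-1 / p))
      = ENNReal.ofReal (2 * c ^ (-1 / p) * 2 ^ e) *
          (ENNReal.ofReal a ^ (-e) * ENNReal.ofReal ((2 * a) ^ (-e))) := by
        rw [ENNReal.ofReal_rpow_of_pos ha, ← ENNReal.ofReal_mul (by positivity),
          ← ENNReal.ofReal_mul (by positivity), ← ENNReal.ofReal_mul (by positivity), hreal]
    _ ≤ _ := by gcongr

theorem setLIntegral_dominanceRegion_ne_top {α : Type*} [MeasurableSpace α] {ν : Measure α}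
    {A B : α → ℝ} (hA : Measurable A) (hB : Measurable B) {s : Set α} (hs : MeasurableSet s)
    (hint : ∀ e : ℝ, e < 1 →
      ∫⁻ w in s, ENNReal.ofReal |A w| ^ (-e) * ENNReal.ofReal |B w| ^ (-e) ∂ν ≠ ∞)
    {c p : ℝ} (hc : 0 < c) (hp : 1 < p) :
    ∫⁻ w in s ∩ dominanceRegion A B 2,
      ENNReal.ofReal (|A w| / 2)⁻¹ * ENNReal.ofReal ((c * |A w|) ^ (-1 / p)) ∂ν ≠ ∞ := by
  set e : ℝ := (1 + 1 / p) / 2 with he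
  have he1 : e < 1 := by
    have : 1 / p < 1 := (div_lt_one (by positivity)).2 hp
    linarith
  refine ne_top_of_le_ne_top (ENNReal.mul_ne_top
    (ENNReal.ofReal_ne_top (r := 2 * c ^ (-1 / p) * 2 ^ e)) (hint e he1)) ?_
  calc _ ≤ ∫⁻ w in s ∩ dominanceRegion A B 2, ENNReal.ofReal (2 * c ^ (-1 / p) * 2 ^ e) *
          (ENNReal.ofReal |A w| ^ (-e) * ENNReal.ofReal |B w| ^ (-e)) ∂ν :=
        setLIntegral_mono' (hs.inter (measurableSet_dominanceRegion hA hB 2)) fun w hw =>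
          ofReal_inv_mul_rpow_le_of_le_two_mul (abs_pos.2 hw.2.1) hc hp hw.2.2
    _ ≤ ∫⁻ w in s, ENNReal.ofReal (2 * c ^ (-1 / p) * 2 ^ e) *
          (ENNReal.ofReal |A w| ^ (-e) * ENNReal.ofReal |B w| ^ (-e)) ∂ν :=
        lintegral_mono_set inter_subset_left
    _ = _ := lintegral_const_mul' _ _ ENNReal.ofReal_ne_top

end DominanceRegion

section DegenerateProjection

variable {H : Type*} [NormedAddCommGroup H] [NormedSpace ℝ H] {x : H}

theorem hasFDerivAt_fderiv_apply {φ : H → ℝ} (hφ : ContDiff ℝ 1 (fderiv ℝ φ)) (x v : H) :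
    HasFDerivAt (fun w => fderiv ℝ φ w v) ((fderiv ℝ (fderiv ℝ φ) x).flip v) x :=
  ((hφ.differentiable one_ne_zero x).hasFDerivAt.clm_apply
    (hasFDerivAt_const v x)).congr_fderiv (by simp)

theorem exists_ball_lipschitzOnWith {A B φ : H → ℝ} (hA : ContDiff ℝ 1 A) (hB : ContDiff ℝ 1 B)
    (hφ : ContDiff ℝ 1 φ) (hx : A x = 0) {ε : ℝ} (hε : 0 < ε) :
    ∃ δ > 0, δ ≤ ε ∧ (∀ w ∈ ball x δ, |A w| ≤ 1) ∧ ∃ L : ℝ≥0, LipschitzOnWith L A (ball x δ) ∧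
      LipschitzOnWith L B (ball x δ) ∧ LipschitzOnWith L φ (ball x δ) := by
  obtain ⟨L, s, hs, hL⟩ :=
    (hA.prodMk (hB.prodMk hφ)).contDiffAt (x := x).exists_lipschitzOnWith
  have hA1 : ∀ᶠ w in nhds x, |A w| ≤ 1 :=
    (hA.continuous.abs.tendsto' x 0 (by simp [hx])).eventually_le_const one_pos
  obtain ⟨δ, hδ, hball⟩ := Metric.mem_nhds_iff.1 (Filter.inter_mem hs hA1)
  have hsub : ball x (min δ ε) ⊆ ball x δ := ball_subset_ball (min_le_left _ _)
  have hlip := hL.mono (hsub.trans fun w hw => (hball hw).1)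
  refine ⟨min δ ε, lt_min hδ hε, min_le_right _ _, fun w hw => (hball (hsub hw)).2, L, ?_, ?_, ?_⟩
  · exact fun w hw w' hw' => (le_max_left _ _).trans (hlip hw hw')
  · exact fun w hw w' hw' => ((le_max_left _ _).trans (le_max_right _ _)).trans (hlip hw hw')
  · exact fun w hw w' hw' => ((le_max_right _ _).trans (le_max_right _ _)).trans (hlip hw hw')

variable {E : Type*} [NormedAddCommGroup E] [NormedSpace ℝ E]

theorem exists_pos_mul_opNorm_mul_le (ι : E →L[ℝ] H) (L : ℝ≥0) {δ : ℝ} (hδ : 0 < δ) :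
    ∃ c > 0, L * (‖ι‖ * c) ≤ 1 / 2 ∧ ‖ι‖ * c ≤ δ / 2 := by
  have hsmall : ∀ᶠ c in nhds (0 : ℝ), L * (‖ι‖ * c) ≤ 1 / 2 ∧ ‖ι‖ * c ≤ δ / 2 :=
    (((by fun_prop : Continuous fun c : ℝ => L * (‖ι‖ * c)).tendsto' 0 0
      (by simp)).eventually_le_const one_half_pos).and
    (((by fun_prop : Continuous fun c : ℝ => ‖ι‖ * c).tendsto' 0 0
      (by simp)).eventually_le_const (half_pos hδ))
  obtain ⟨c, hc, hc0⟩ := ((hsmall.filter_mono nhdsWithin_le_nhds).and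
    (self_mem_nhdsWithin (s := Ioi (0 : ℝ)))).exists
  exact ⟨c, hc0, hc⟩

variable [MeasureSpace E] [BorelSpace E] [FiniteDimensional ℝ E]
  [(volume : Measure E).IsAddHaarMeasure] {π : H →L[ℝ] E} {ℓ : E →L[ℝ] ℝ} {u : E} {φ : H → ℝ}

theorem setLIntegral_ball_comp_graph_le_of_lipschitzOnWith (hφ : ContDiff ℝ 2 φ) {ι : E →L[ℝ] H}
    (hι : ∀ q, π (ι q) = q - ℓ q • u) (hu : ℓ u = 1) {δ c : ℝ} (hδ : 0 ≤ δ) {L : ℝ≥0}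
    (hAL : LipschitzOnWith L (fun w => fderiv ℝ φ w (ι u)) (ball x δ))
    (hφL : LipschitzOnWith L φ (ball x δ)) (hA1 : ∀ w ∈ ball x δ, |fderiv ℝ φ w (ι u)| ≤ 1)
    (hcL : L * (‖ι‖ * c) ≤ 1 / 2) (hcδ : ‖ι‖ * c ≤ δ / 2) {w : H} (hw : w ∈ ball x (δ / 2))
    (hAw : fderiv ℝ φ w (ι u) ≠ 0) (F : E → ℝ≥0∞) :
    ∫⁻ q in ball 0 (c * |fderiv ℝ φ w (ι u)|), F (π (w + ι q) + φ (w + ι q) • u) ≤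
      ENNReal.ofReal (|fderiv ℝ φ w (ι u)| / 2)⁻¹ *
        ∫⁻ y in ball (π w + φ w • u)
          ((1 + (L * ‖ι‖ + ‖ℓ‖) * ‖u‖) * (c * |fderiv ℝ φ w (ι u)|)), F y := by
  set A : H → ℝ := fun w => fderiv ℝ φ w (ι u)
  have hwδ : w ∈ ball x δ := ball_subset_ball (half_le_self hδ) hw
  have hnear : ∀ q ∈ ball (0 : E) (c * |A w|), ‖q‖ ≤ 1 * (c * |A w|) ∧ w + ι q ∈ ball x δ := by
    intro q hq
    have hq' : ‖q‖ ≤ 1 * (c * |A w|) := by simpa using (mem_ball_zero_iff.1 hq).le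
    have := add_mem_ball_of_norm_le hcδ hδ (hA1 w hwδ) (abs_nonneg _) zero_le_one hw hq'
    rw [one_mul, add_halves] at this
    exact ⟨hq', this⟩
  refine setLIntegral_ball_comp_graph_le volume hι hu
    (fun q _ => (hφ.differentiable (by norm_num)).differentiableAt)
    (half_pos (abs_pos.2 hAw)) (fun q hq => ?_) (fun q hq => ?_) F
  · have hAq := abs_sub_le_of_lipschitzOnWith hAL hcL (abs_nonneg _) zero_le_one hwδ
      (hnear q hq).2 (hnear q hq).1
    have := abs_le.1 ((abs_abs_sub_abs_le _ _).trans hAq)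
    linarith
  · calc |φ (w + ι q) - φ w| ≤ L * dist (w + ι q) w := hφL.dist_le_mul _ (hnear q hq).2 _ hwδ
      _ ≤ L * (‖ι‖ * (c * |A w|)) := by
          rw [dist_self_add_left]
          gcongr
          exact ι.le_opNorm_of_le (mem_ball_zero_iff.1 hq).le
      _ = L * ‖ι‖ * (c * |A w|) := by ring

variable [FiniteDimensional ℝ H] [MeasurableSpace H] [BorelSpace H] {ν : Measure H}
  [ν.IsAddHaarMeasure]

namespace DominatedByBallAverages

theorem exists_map_graph_dominanceRegion (hφ : ContDiff ℝ 2 φ) {ι : E →L[ℝ] H}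
    (hι : ∀ q, π (ι q) = q - ℓ q • u) (hu : ℓ u = 1) (hx : fderiv ℝ φ x (ι u) = 0) {B : H → ℝ}
    (hB : ContDiff ℝ 1 B) {ε : ℝ} (hε : 0 < ε)
    (hint : ∀ e : ℝ, e < 1 → ∫⁻ w in ball x ε,
      ENNReal.ofReal |fderiv ℝ φ w (ι u)| ^ (-e) * ENNReal.ofReal |B w| ^ (-e) ∂ν ≠ ∞) :
    ∃ δ > 0, DominatedByBallAverages ((ν.restrict
      (ball x δ ∩ dominanceRegion (fun w => fderiv ℝ φ w (ι u)) B 1)).map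
        fun w => π w + φ w • u) := by
  set A : H → ℝ := fun w => fderiv ℝ φ w (ι u)
  have hA : ContDiff ℝ 1 A := (hφ.fderiv_right (m := 1) (by norm_num)).clm_apply contDiff_const
  have hAm := hA.continuous.measurable
  have hBm := hB.continuous.measurable
  have hφc := hφ.continuous
  have hYc : Continuous fun w => π w + φ w • u := by fun_prop
  obtain ⟨δ, hδ, hδε, hA1, L, hAL, hBL, hφL⟩ :=
    exists_ball_lipschitzOnWith hA hB (hφ.of_le (by norm_num)) hx hε
  obtain ⟨c, hc, hcL, hcδ⟩ := exists_pos_mul_opNorm_mul_le ι L hδ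
  obtain ⟨R, hR⟩ := ((isCompact_closedBall x δ).image hYc).isBounded.exists_norm_le
  refine ⟨δ / 4, by positivity, of_isWhitneyScale (κ := fun w => c * |A w|)
    (ρ := fun w => ENNReal.ofReal (|A w| / 2)⁻¹) (L := 1 + (L * ‖ι‖ + ‖ℓ‖) * ‖u‖) (R := max R c)
    (measurableSet_ball.inter (measurableSet_dominanceRegion hAm hBm 1))
    (measurableSet_ball.inter (measurableSet_dominanceRegion hAm hBm 2)) (by fun_prop)
    (by fun_prop) hYc.measurable (by positivity)
    (isWhitneyScale_dominanceRegion hAL hBL hA1 hc hcL hcδ) (fun w hw => ?_)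
    (fun w hw F _ => ?_) fun p hp => ?_⟩
  · have hwδ : w ∈ ball x δ := ball_subset_ball (half_le_self hδ.le) hw.1
    exact ⟨le_max_of_le_left (hR _ (mem_image_of_mem _ (ball_subset_closedBall hwδ))),
      mul_pos hc (abs_pos.2 hw.2.1), le_max_of_le_right (mul_le_of_le_one_right hc.le (hA1 w hwδ))⟩
  · exact setLIntegral_ball_comp_graph_le_of_lipschitzOnWith hφ hι hu hδ.le hAL hφL
      (fun w hw => hA1 w hw) hcL hcδ hw.1 hw.2.1 F
  · exact setLIntegral_dominanceRegion_ne_top (s := ball x (δ / 2)) hAm hBm measurableSet_ball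
      (fun e he => ne_top_of_le_ne_top (hint e he)
        (lintegral_mono_set (ball_subset_ball (by linarith)))) hc hp

theorem exists_map_graph_of_surjective (hφ : ContDiff ℝ 2 φ) {ι₁ ι₂ : E →L[ℝ] H}
    (hι₁ : ∀ q, π (ι₁ q) = q - ℓ q • u) (hι₂ : ∀ q, π (ι₂ q) = q - ℓ q • u) (hu : ℓ u = 1)
    (hx : fderiv ℝ φ x = 0)
    (hsurj : Function.Surjective fun τ => (fderiv ℝ (fderiv ℝ φ) x τ (ι₁ u),
      fderiv ℝ (fderiv ℝ φ) x τ (ι₂ u))) :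
    ∃ δ > 0, DominatedByBallAverages ((ν.restrict (ball x δ)).map fun w => π w + φ w • u) := by
  have hφ' : ContDiff ℝ 1 (fderiv ℝ φ) := hφ.fderiv_right (by norm_num)
  have hA : ∀ v, ContDiff ℝ 1 fun w => fderiv ℝ φ w v := fun v => hφ'.clm_apply contDiff_const
  have hT : ContDiff ℝ 1 fun w => (fderiv ℝ φ w (ι₁ u), fderiv ℝ φ w (ι₂ u)) :=
    (hA _).prodMk (hA _)
  have hYm : Measurable fun w => π w + φ w • u := by
    have := hφ.continuous
    exact Continuous.measurable (by fun_prop)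
  obtain ⟨ε, hε, hne, hint⟩ := exists_lintegral_abs_rpow_mul_abs_rpow_ne_top ν
    hT.continuous.measurable
    (hT.contDiffAt.hasStrictFDerivAt' ((hasFDerivAt_fderiv_apply hφ' x (ι₁ u)).prodMk
      (hasFDerivAt_fderiv_apply hφ' x (ι₂ u))) one_ne_zero) hsurj (by simp [hx])
  obtain ⟨δ₁, hδ₁, h₁⟩ := exists_map_graph_dominanceRegion hφ hι₁ hu (by simp [hx]) (hA _) hε hint
  obtain ⟨δ₂, hδ₂, h₂⟩ := exists_map_graph_dominanceRegion hφ hι₂ hu (by simp [hx]) (hA _) hε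
    fun e he => (lintegral_congr fun w => mul_comm _ _).trans_ne (hint e he)
  refine ⟨min ε (min δ₁ δ₂), by positivity, (h₁.add h₂).mono ?_⟩
  rw [← Measure.map_add _ _ hYm]
  refine Measure.map_mono (le_trans ?_ (Measure.restrict_union_le _ _)) hYm
  refine Measure.restrict_mono_ae ?_
  filter_upwards [(ae_restrict_iff' measurableSet_ball).1 hne] with w hw hwδ
  obtain ⟨hwε, hwδ₁, hwδ₂⟩ : dist w x < ε ∧ dist w x < δ₁ ∧ dist w x < δ₂ := by
    simpa only [lt_min_iff] using mem_ball.1 hwδ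
  exact (mem_dominanceRegion_or_of_ne_zero (hw hwε)).imp (⟨hwδ₁, ·⟩) (⟨hwδ₂, ·⟩)

end DominatedByBallAverages

end DegenerateProjection

section BilinearForms

variable {K V W : Type*} [Field K] [AddCommGroup V] [Module K V] [AddCommGroup W] [Module K W]

theorem exists_surjective_prodMk_of_finrank_ker_add_two_le [FiniteDimensional K W]
    (β : W →ₗ[K] V →ₗ[K] K)
    (h : Module.finrank K (LinearMap.ker β) + 2 ≤ Module.finrank K W) :
    ∃ v₁ v₂, Function.Surjective fun w => (β w v₁, β w v₂) := by
  obtain ⟨W', hW'⟩ := (LinearMap.ker β).exists_isCompl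
  have hdim : 2 ≤ Module.finrank K W' := by
    have := Submodule.finrank_add_eq_of_isCompl hW'
    omega
  have hinj : Function.Injective (β.domRestrict W') := by
    rw [← LinearMap.ker_eq_bot, LinearMap.ker_domRestrict, ← Submodule.disjoint_iff_comap_eq_bot]
    exact hW'.disjoint.symm
  have hsurj := LinearMap.flip_surjective_iff₁.2 hinj
  set b := Module.finBasis K W'
  obtain ⟨v₁, hv₁⟩ := hsurj (b.coord ⟨0, by omega⟩)
  obtain ⟨v₂, hv₂⟩ := hsurj (b.coord ⟨1, by omega⟩)
  have hβ₁ : ∀ w : W', β w v₁ = b.coord ⟨0, by omega⟩ w := fun w => DFunLike.congr_fun hv₁ w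
  have hβ₂ : ∀ w : W', β w v₂ = b.coord ⟨1, by omega⟩ w := fun w => DFunLike.congr_fun hv₂ w
  refine ⟨v₁, v₂, fun z => ⟨(z.1 • b ⟨0, by omega⟩ + z.2 • b ⟨1, by omega⟩ : W'), ?_⟩⟩
  simp only [hβ₁, hβ₂]
  simp

variable {E F : Type*} [AddCommGroup E] [Module K E] [FiniteDimensional K E] [AddCommGroup F]
  [Module K F] {B : F →ₗ[K] F →ₗ[K] K} {π : F →ₗ[K] E} {j : E →ₗ[K] F} {L : F →ₗ[K] K}
  {W : Submodule K F}

theorem finrank_add_one_le_of_forall_ker (hj : ∀ q, π (j q) = q) (hL : L ≠ 0)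
    (hLπ : LinearMap.ker π ≤ LinearMap.ker L) (hW : W ≤ LinearMap.ker L)
    (hB : ∀ w ∈ W, w ≠ 0 → ∃ w' ∈ W, B w w' ≠ 0) {N : Submodule K F} (hNW : N ≤ W)
    (hN : ∀ w ∈ N, ∀ v ∈ LinearMap.ker π, B w v = 0) :
    Module.finrank K N + 1 ≤ Module.finrank K E := by
  have hsplit : ∀ x, x - j (π x) ∈ LinearMap.ker π := fun x => by
    rw [LinearMap.mem_ker, map_sub, hj, sub_self]
  have hLj : ∀ x, L (j (π x)) = L x := fun x => by
    have := LinearMap.mem_ker.1 (hLπ (hsplit x))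
    rw [map_sub, sub_eq_zero] at this
    exact this.symm
  have hLj0 : L.comp j ≠ 0 := fun h => hL <| LinearMap.ext fun x => by
    rw [← hLj]
    exact DFunLike.congr_fun h (π x)
  set M := LinearMap.ker (L.comp j)
  let γ : N →ₗ[K] Module.Dual K M :=
    (LinearMap.lcomp K K (j.comp M.subtype)).comp (B.comp N.subtype)
  have hγ : Function.Injective γ := by
    refine (injective_iff_map_eq_zero γ).2 fun w hw => ?_
    by_contra hw0
    obtain ⟨w', hw', hne⟩ := hB w (hNW w.2) (by simpa using hw0)
    have hjπ : B w (j (π w')) = 0 :=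
      DFunLike.congr_fun hw ⟨π w', LinearMap.mem_ker.2 ((hLj w').trans (hW hw'))⟩
    refine hne ?_
    rw [← sub_add_cancel w' (j (π w')), map_add, hN w w.2 _ (hsplit w'), hjπ, add_zero]
  calc Module.finrank K N + 1 ≤ Module.finrank K (Module.Dual K M) + 1 := by
        gcongr
        exact LinearMap.finrank_le_finrank_of_injective hγ
    _ = Module.finrank K E := by
        rw [Subspace.dual_finrank_eq, Module.Dual.finrank_ker_add_one_of_ne_zero hLj0]

theorem exists_ker_surjective_prodMk_of_nondegenerate [FiniteDimensional K F]
    (hj : ∀ q, π (j q) = q) (hL : L ≠ 0) (hLπ : LinearMap.ker π ≤ LinearMap.ker L)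
    (hW : W ≤ LinearMap.ker L) (hdim : Module.finrank K E + 1 ≤ Module.finrank K W)
    (hB : ∀ w ∈ W, w ≠ 0 → ∃ w' ∈ W, B w w' ≠ 0) :
    ∃ v₁ ∈ LinearMap.ker π, ∃ v₂ ∈ LinearMap.ker π,
      Function.Surjective fun w : W => (B w v₁, B w v₂) := by
  let β : W →ₗ[K] LinearMap.ker π →ₗ[K] K :=
    (LinearMap.lcomp K K (LinearMap.ker π).subtype).comp (B.comp W.subtype)
  have hker := finrank_add_one_le_of_forall_ker (N := (LinearMap.ker β).map W.subtype) hj hL hLπ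
    hW hB (Submodule.map_subtype_le _ _) (by
      rintro _ ⟨w, hw, rfl⟩ v hv
      exact DFunLike.congr_fun (LinearMap.mem_ker.1 hw) (⟨v, hv⟩ : LinearMap.ker π))
  rw [Submodule.finrank_map_subtype_eq] at hker
  obtain ⟨v₁, v₂, hv⟩ := exists_surjective_prodMk_of_finrank_ker_add_two_le β (by omega)
  exact ⟨v₁, v₁.2, v₂, v₂.2, hv⟩

end BilinearForms

section GraphChart

theorem hausdorffMeasure_restrict_le_smul_map_of_lipschitzOnWith {X Y : Type*} [EMetricSpace X]
    [MeasurableSpace X] [BorelSpace X] [EMetricSpace Y] [MeasurableSpace Y] [BorelSpace Y]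
    {K : ℝ≥0} {ψ : X → Y} (hψm : Measurable ψ) {t : Set X} (hψ : LipschitzOnWith K ψ t) {s : Set Y}
    (hs : s ⊆ ψ '' t) {d : ℝ} (hd : 0 ≤ d) :
    (μH[d]).restrict s ≤ (K ^ d) • ((μH[d] : Measure X).restrict t).map ψ := by
  refine Measure.le_iff.2 fun A hA => ?_
  rw [Measure.restrict_apply hA, Measure.smul_apply, Measure.map_apply hψm hA,
    Measure.restrict_apply (hψm hA), ENNReal.smul_def, smul_eq_mul,
    ENNReal.coe_rpow_of_nonneg _ hd]
  have hsub : A ∩ s ⊆ ψ '' (ψ ⁻¹' A ∩ t) := by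
    rintro _ ⟨hyA, hys⟩
    obtain ⟨x, hx, rfl⟩ := hs hys
    exact ⟨x, ⟨hyA, hx⟩, rfl⟩
  exact (measure_mono hsub).trans ((hψ.mono inter_subset_right).hausdorffMeasure_image_le hd)

theorem exists_contDiff_eventuallyEq {H E : Type*} [NormedAddCommGroup H] [NormedSpace ℝ H]
    [FiniteDimensional ℝ H] [NormedAddCommGroup E] [NormedSpace ℝ E] {f : H → E} {x : H} {k : ℕ}
    (hf : ContDiffAt ℝ k f x) : ∃ g : H → E, ContDiff ℝ k g ∧ g =ᶠ[nhds x] f := by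
  obtain ⟨r, hr, hball⟩ := Metric.eventually_nhds_iff_ball.1 (hf.eventually (by simp))
  let χ : ContDiffBump x := ⟨r / 4, r / 2, by positivity, by linarith⟩
  refine ⟨fun y => χ y • f y, contDiff_iff_contDiffAt.2 fun y => ?_, ?_⟩
  · by_cases hy : y ∈ tsupport (fun y => χ y • f y)
    · have hy' : y ∈ closedBall x (r / 2) := χ.tsupport_eq ▸ tsupport_smul_subset_left χ f hy
      exact χ.contDiff.contDiffAt.smul (hball y (closedBall_subset_ball (by linarith) hy'))
    · exact contDiffAt_const.congr_of_eventuallyEq (notMem_tsupport_iff_eventuallyEq.1 hy)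
  · filter_upwards [closedBall_mem_nhds x (by positivity : 0 < r / 4)] with y hy
    rw [χ.one_of_mem_closedBall hy, one_smul]

variable {F : Type*} [NormedAddCommGroup F] [NormedSpace ℝ F] {Φ : F → ℝ} {p e : F}
  {ℓ : F →L[ℝ] ℝ}

theorem exists_graph_chart [FiniteDimensional ℝ F] (hΦ : ContDiff ℝ 2 Φ) (hp : Φ p = 0)
    (hℓ : HasFDerivAt Φ ℓ p) (he : ℓ e ≠ 0) :
    ∃ (φ : ℓ.ker → ℝ) (h₀ : ℓ.ker), ContDiff ℝ 2 φ ∧ h₀ + φ h₀ • e = p ∧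
      (∀ᶠ h : ℓ.ker in nhds h₀, Φ (h + φ h • e) = 0) ∧
      ∀ U ∈ nhds h₀, ∀ᶠ x in nhds p, Φ x = 0 → ∃ h ∈ U, h + φ h • e = x := by
  let coord : F →L[ℝ] ℝ := (ℓ e)⁻¹ • ℓ
  let proj : F →L[ℝ] ℓ.ker := (ContinuousLinearMap.id ℝ F - coord.smulRight e).codRestrict ℓ.ker
    fun x => by simp [coord, LinearMap.mem_ker, mul_right_comm, he]
  have hproj : ∀ x, (proj x : F) + coord x • e = x := fun x => sub_add_cancel x _
  let graph : ℓ.ker × ℝ →L[ℝ] F := ℓ.ker.subtypeL.comp (.fst ℝ ℓ.ker ℝ) +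
    (ContinuousLinearMap.snd ℝ ℓ.ker ℝ).smulRight e
  have hz : graph (proj p, coord p) = p := hproj p
  have hf : ContDiffAt ℝ 2 (Φ ∘ graph) (proj p, coord p) := (hΦ.comp graph.contDiff).contDiffAt
  have hinv : (fderiv ℝ (Φ ∘ graph) (proj p, coord p) ∘L .inr ℝ ℓ.ker ℝ).IsInvertible := by
    rw [((hz.symm ▸ hℓ : HasFDerivAt Φ ℓ (graph (proj p, coord p))).comp _
      graph.hasFDerivAt).fderiv]
    refine ⟨ContinuousLinearEquiv.unitsEquivAut ℝ (Units.mk0 _ he), ?_⟩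
    ext
    simp [graph]
  have hf0 : (Φ ∘ graph) (proj p, coord p) = 0 := by rw [Function.comp_apply, hz, hp]
  obtain ⟨φ, hφ, hφ_eq⟩ := exists_contDiff_eventuallyEq
    (hf.contDiffAt_implicitFunction two_ne_zero hinv)
  refine ⟨φ, proj p, hφ, ?_, ?_, fun U hU => ?_⟩
  · rw [hφ_eq.self_of_nhds, hf.implicitFunction_apply_self two_ne_zero hinv, hproj]
  · filter_upwards [hf.eventually_apply_implicitFunction two_ne_zero hinv, hφ_eq] with h hh hφh
    rw [hφh]
    exact hh.trans hf0
  · have hproj_tendsto := proj.continuous.tendsto p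
    have hiff := (proj.continuous.prodMk coord.continuous).tendsto p |>.eventually
      (hf.eventually_apply_eq_iff_implicitFunction two_ne_zero hinv)
    filter_upwards [hiff, hproj_tendsto.eventually hφ_eq, hproj_tendsto hU]
      with x hx hφx hxU hΦx
    refine ⟨proj x, hxU, ?_⟩
    rw [hφx, hx.1 (by rw [hf0]; exact (congrArg Φ (hproj x)).trans hΦx), hproj]

variable {H : Submodule ℝ F} {φ : H → ℝ} {h₀ : H}

theorem hasFDerivAt_graph {h : H} (hφ : DifferentiableAt ℝ φ h) :
    HasFDerivAt (fun h : H => (h : F) + φ h • e) (H.subtypeL + (fderiv ℝ φ h).smulRight e) h := by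
  have hsubtype : HasFDerivAt (fun h : H => (h : F)) H.subtypeL h := H.subtypeL.hasFDerivAt
  exact hsubtype.add (hφ.hasFDerivAt.smul_const e)

theorem fderiv_add_mul_fderiv_eq_zero_of_graph {h : H} (hΦ : DifferentiableAt ℝ Φ (h + φ h • e))
    (hφ : DifferentiableAt ℝ φ h) (hzero : ∀ᶠ h : H in nhds h, Φ (h + φ h • e) = 0) (τ : H) :
    fderiv ℝ Φ (h + φ h • e) τ + fderiv ℝ φ h τ * fderiv ℝ Φ (h + φ h • e) e = 0 := by
  have hcomp := HasFDerivAt.comp h (f := fun h : H => (h : F) + φ h • e) hΦ.hasFDerivAt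
    (hasFDerivAt_graph hφ)
  have hconst := (hasFDerivAt_const (𝕜 := ℝ) (0 : ℝ) h).congr_of_eventuallyEq hzero
  simpa using DFunLike.congr_fun (hcomp.unique hconst) τ

theorem fderiv_eq_zero_of_graph (hΦ : DifferentiableAt ℝ Φ (h₀ + φ h₀ • e))
    (hφ : DifferentiableAt ℝ φ h₀) (hzero : ∀ᶠ h : H in nhds h₀, Φ (h + φ h • e) = 0)
    (hH : ∀ τ ∈ H, fderiv ℝ Φ (h₀ + φ h₀ • e) τ = 0) (he : fderiv ℝ Φ (h₀ + φ h₀ • e) e ≠ 0) :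
    fderiv ℝ φ h₀ = 0 := by
  ext τ
  have := fderiv_add_mul_fderiv_eq_zero_of_graph hΦ hφ hzero τ
  rw [hH τ τ.2, zero_add] at this
  exact (mul_eq_zero.1 this).resolve_right he

theorem fderiv_fderiv_add_mul_eq_zero_of_graph (hΦ : ContDiff ℝ 2 Φ) (hφ : ContDiff ℝ 2 φ)
    (hzero : ∀ᶠ h : H in nhds h₀, Φ (h + φ h • e) = 0) (hφ₀ : fderiv ℝ φ h₀ = 0) (τ v : H) :
    fderiv ℝ (fderiv ℝ Φ) (h₀ + φ h₀ • e) τ v +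
      fderiv ℝ (fderiv ℝ φ) h₀ τ v * fderiv ℝ Φ (h₀ + φ h₀ • e) e = 0 := by
  have hΦd := hΦ.differentiable two_ne_zero
  have hφd := hφ.differentiable two_ne_zero
  have hΦ' : ContDiff ℝ 1 (fderiv ℝ Φ) := hΦ.fderiv_right (by norm_num)
  have hφ' : ContDiff ℝ 1 (fderiv ℝ φ) := hφ.fderiv_right (by norm_num)
  have hgraph := hasFDerivAt_graph (e := e) (hφd h₀)
  have hcomp := ((hasFDerivAt_fderiv_apply hΦ' _ (v : F)).comp h₀ hgraph).add
    ((hasFDerivAt_fderiv_apply hφ' h₀ v).mul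
      ((hasFDerivAt_fderiv_apply hΦ' _ e).comp h₀ hgraph))
  have hconst := (hasFDerivAt_const (𝕜 := ℝ) (0 : ℝ) h₀).congr_of_eventuallyEq
    (hzero.eventually_nhds.mono fun h hh =>
      fderiv_add_mul_fderiv_eq_zero_of_graph (hΦd _) (hφd h) hh v)
  simpa [hφ₀, mul_comm] using DFunLike.congr_fun (hcomp.unique hconst) τ

end GraphChart

section Hypersurface

variable {E F : Type*} [NormedAddCommGroup E] [NormedSpace ℝ E] [NormedAddCommGroup F]
  [NormedSpace ℝ F] {π : F →L[ℝ] E} {Φ : F → ℝ} {ℓ : F →L[ℝ] ℝ} {e p : F} {S : Set F}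

theorem surjective_fderiv_fderiv_of_graph (hΦ : ContDiff ℝ 2 Φ) {H W : Submodule ℝ F} {φ : H → ℝ}
    (hφ : ContDiff ℝ 2 φ) {h₀ : H} (hzero : ∀ᶠ h : H in nhds h₀, Φ (h + φ h • e) = 0)
    (hφ₀ : fderiv ℝ φ h₀ = 0) (he : fderiv ℝ Φ (h₀ + φ h₀ • e) e ≠ 0) (hW : W ≤ H) {v₁ v₂ : H}
    (hsurj : Function.Surjective fun w : W =>
      (fderiv ℝ (fderiv ℝ Φ) (h₀ + φ h₀ • e) w v₁, fderiv ℝ (fderiv ℝ Φ) (h₀ + φ h₀ • e) w v₂)) :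
    Function.Surjective fun τ : H =>
      (fderiv ℝ (fderiv ℝ φ) h₀ τ v₁, fderiv ℝ (fderiv ℝ φ) h₀ τ v₂) := by
  rintro ⟨a, b⟩
  obtain ⟨w, hw⟩ := hsurj
    (-(a * fderiv ℝ Φ (h₀ + φ h₀ • e) e), -(b * fderiv ℝ Φ (h₀ + φ h₀ • e) e))
  obtain ⟨hw₁, hw₂⟩ := Prod.mk.inj hw
  have hgraph := fderiv_fderiv_add_mul_eq_zero_of_graph hΦ hφ hzero hφ₀ ⟨w, hW w.2⟩
  refine ⟨⟨w, hW w.2⟩, Prod.ext (mul_right_cancel₀ he ?_) (mul_right_cancel₀ he ?_)⟩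
  · linear_combination hgraph v₁ - hw₁
  · linear_combination hgraph v₂ - hw₂

theorem exists_lift_ker {j : E →L[ℝ] F} (hj : ∀ q, π (j q) = q) {u : E} (hu : ℓ (j u) ≠ 0) {v : F}
    (hπv : π v = 0) (hℓv : ℓ v = 0) :
    ∃ ι : E →L[ℝ] ℓ.ker, (∀ q, π (ι q) = q - ((ℓ (j u))⁻¹ • ℓ.comp j) q • u) ∧ ι u = v := by
  let coord : E →L[ℝ] ℝ := (ℓ (j u))⁻¹ • ℓ.comp j
  have hmem : ∀ q, (j + coord.smulRight (v - j u)) q ∈ ℓ.ker := fun q => by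
    simp [coord, LinearMap.mem_ker, hℓv, mul_right_comm, hu]
  refine ⟨(j + coord.smulRight (v - j u)).codRestrict ℓ.ker hmem, fun q => ?_, ?_⟩
  · simp [coord, hj, hπv, sub_eq_add_neg]
  · simp [coord, hu]

variable [MeasureSpace E] [MeasurableSpace F] [BorelSpace F]

namespace DominatedByBallAverages

theorem exists_map_restrict_inter_of_chart {H : Type*} [NormedAddCommGroup H] [NormedSpace ℝ H]
    [MeasurableSpace H] [BorelSpace H] {ψ : H → F} (hψ : ContDiff ℝ 1 ψ) {h₀ : H}
    (hcover : ∀ U ∈ nhds h₀, ∀ᶠ x in nhds p, x ∈ S → ∃ h ∈ U, ψ h = x) {d : ℝ} (hd : 0 ≤ d)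
    {π : F → E} (hπ : Measurable π)
    (hdom : ∃ δ > 0, DominatedByBallAverages ((μH[d].restrict (ball h₀ δ)).map (π ∘ ψ))) :
    ∃ U ∈ nhds p, DominatedByBallAverages ((μH[d].restrict (S ∩ U)).map π) := by
  obtain ⟨δ, hδ, hdom⟩ := hdom
  obtain ⟨K, t, ht, hlip⟩ := hψ.contDiffAt.exists_lipschitzOnWith (x := h₀)
  have hψm : Measurable ψ := hψ.continuous.measurable
  let U := {x | x ∈ S → ∃ h ∈ t ∩ ball h₀ δ, ψ h = x}
  refine ⟨U, hcover _ (Filter.inter_mem ht (ball_mem_nhds h₀ hδ)), (hdom.smul (K ^ d)).mono ?_⟩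
  rw [← Measure.map_map hπ hψm, ← Measure.map_smul]
  refine Measure.map_mono ?_ hπ
  calc μH[d].restrict (S ∩ U)
      ≤ (K ^ d) • (μH[d].restrict (t ∩ ball h₀ δ)).map ψ :=
        hausdorffMeasure_restrict_le_smul_map_of_lipschitzOnWith hψm (hlip.mono inter_subset_left)
          (fun x hx => hx.2 hx.1) hd
    _ ≤ (K ^ d) • (μH[d].restrict (ball h₀ δ)).map ψ := by
        gcongr
        exact inter_subset_right

variable [BorelSpace E] [FiniteDimensional ℝ F]

theorem exists_map_restrict_inter_of_graph (hΦ : ContDiff ℝ 2 Φ) (hp : Φ p = 0)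
    (hℓ : HasFDerivAt Φ ℓ p) (he : ℓ e ≠ 0) (hS : ∀ᶠ x in nhds p, x ∈ S → Φ x = 0)
    (hdom : ∀ (φ : ℓ.ker → ℝ) (h₀ : ℓ.ker), ContDiff ℝ 2 φ → h₀ + φ h₀ • e = p →
      (∀ᶠ h : ℓ.ker in nhds h₀, Φ (h + φ h • e) = 0) →
      ∃ δ > 0, DominatedByBallAverages
        (((μH[Module.finrank ℝ ℓ.ker] : Measure ℓ.ker).restrict (ball h₀ δ)).map
          fun h : ℓ.ker => π h + φ h • π e)) :
    ∃ U ∈ nhds p, DominatedByBallAverages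
      ((μH[(Module.finrank ℝ F : ℝ) - 1].restrict (S ∩ U)).map π) := by
  have hdim : (Module.finrank ℝ F : ℝ) - 1 = Module.finrank ℝ ℓ.ker := by
    rw [← Module.Dual.finrank_ker_add_one_of_ne_zero (f := ℓ.toLinearMap)
      fun h => he (DFunLike.congr_fun h e), Nat.cast_add_one, add_sub_cancel_right]
  obtain ⟨φ, h₀, hφ, hφp, hzero, hcover⟩ := exists_graph_chart hΦ hp hℓ he
  rw [hdim]
  refine exists_map_restrict_inter_of_chart (ψ := fun h : ℓ.ker => (h : F) + φ h • e)
    (h₀ := h₀) ?_ (fun U hU => ?_) (Nat.cast_nonneg _) π.continuous.measurable ?_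
  · exact ℓ.ker.subtypeL.contDiff.add ((hφ.of_le one_le_two).smul contDiff_const)
  · filter_upwards [hcover U hU, hS] with x hx hxS hmem
    exact hx (hxS hmem)
  · simpa [Function.comp_def] using hdom φ h₀ hφ hφp hzero

variable [FiniteDimensional ℝ E] [(volume : Measure E).IsAddHaarMeasure]

theorem exists_map_restrict_inter_of_map_eq_zero (hΦ : ContDiff ℝ 2 Φ) (hp : Φ p = 0)
    (hℓ : HasFDerivAt Φ ℓ p) (he : ℓ e ≠ 0) (hS : ∀ᶠ x in nhds p, x ∈ S → Φ x = 0)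
    (hπ : Function.Surjective π) (hπe : π e = 0) :
    ∃ U ∈ nhds p, DominatedByBallAverages
      ((μH[(Module.finrank ℝ F : ℝ) - 1].restrict (S ∩ U)).map π) := by
  refine exists_map_restrict_inter_of_graph hΦ hp hℓ he hS fun φ h₀ _ _ _ => ?_
  let T : ℓ.ker →L[ℝ] E := π.comp ℓ.ker.subtypeL
  have hT : Function.Surjective T := fun y => by
    obtain ⟨x, rfl⟩ := hπ y
    refine ⟨⟨x - (ℓ x / ℓ e) • e, ?_⟩, ?_⟩
    · simp [LinearMap.mem_ker, he]
    · simp [T, hπe]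
  simp only [hπe, smul_zero, add_zero]
  exact exists_map_of_surjective _ T.measurable T.hasStrictFDerivAt hT

theorem exists_map_restrict_inter_of_ker_le (hΦ : ContDiff ℝ 2 Φ) (hp : Φ p = 0)
    (hℓ : HasFDerivAt Φ ℓ p) (hℓ₀ : ℓ ≠ 0) (hS : ∀ᶠ x in nhds p, x ∈ S → Φ x = 0)
    (hπ : Function.Surjective π) (hker : π.ker ≤ ℓ.ker) {W : Submodule ℝ F} (hW : W ≤ ℓ.ker)
    (hdim : Module.finrank ℝ E + 1 ≤ Module.finrank ℝ W)
    (hnd : ∀ w ∈ W, w ≠ 0 → ∃ w' ∈ W, fderiv ℝ (fderiv ℝ Φ) p w w' ≠ 0) :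
    ∃ U ∈ nhds p, DominatedByBallAverages
      ((μH[(Module.finrank ℝ F : ℝ) - 1].restrict (S ∩ U)).map π) := by
  obtain ⟨j, hj⟩ := π.exists_rightInverse_of_surjective (LinearMap.range_eq_top.2 hπ)
  replace hj : ∀ q, π (j q) = q := fun q => DFunLike.congr_fun hj q
  obtain ⟨v₁, hv₁, v₂, hv₂, hsurj⟩ := exists_ker_surjective_prodMk_of_nondegenerate
    (π := π.toLinearMap) (j := j.toLinearMap) (L := ℓ.toLinearMap)
    (B := (ContinuousLinearMap.coeLM ℝ).comp (fderiv ℝ (fderiv ℝ Φ) p).toLinearMap)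
    hj (fun h => hℓ₀ (ContinuousLinearMap.coe_injective h)) hker hW hdim hnd
  obtain ⟨u, hu⟩ : ∃ u, ℓ (j u) ≠ 0 := by
    by_contra! h
    refine hℓ₀ (ContinuousLinearMap.ext fun x => ?_)
    have hx : ℓ (x - j (π x)) = 0 := hker (by simp [LinearMap.mem_ker, hj])
    simpa [h] using hx
  obtain ⟨ι₁, hι₁, hι₁u⟩ := exists_lift_ker hj hu hv₁ (hker hv₁)
  obtain ⟨ι₂, hι₂, hι₂u⟩ := exists_lift_ker hj hu hv₂ (hker hv₂)
  refine exists_map_restrict_inter_of_graph hΦ hp hℓ hu hS fun φ h₀ hφ hφp hzero => ?_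
  subst hφp
  rw [← hι₁u, ← hι₂u] at hsurj
  rw [← hℓ.fderiv] at hu
  have hφ₀ : fderiv ℝ φ h₀ = 0 := fderiv_eq_zero_of_graph hℓ.differentiableAt
    (hφ.differentiable two_ne_zero h₀) hzero (fun τ hτ => by rw [hℓ.fderiv]; exact hτ) hu
  simpa [hj] using exists_map_graph_of_surjective (π := π.comp ℓ.ker.subtypeL)
    (ν := μH[Module.finrank ℝ ℓ.ker]) hφ hι₁ hι₂ (by simp [← hℓ.fderiv, hu]) hφ₀
    (surjective_fderiv_fderiv_of_graph hΦ hφ hzero hφ₀ hu hW hsurj)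

theorem exists_map_restrict_inter_of_nondegenerate (hΦ : ContDiff ℝ 2 Φ) (hp : Φ p = 0)
    (hℓ : HasFDerivAt Φ ℓ p) (hℓ₀ : ℓ ≠ 0) (hS : ∀ᶠ x in nhds p, x ∈ S → Φ x = 0)
    (hπ : Function.Surjective π) {W : Submodule ℝ F} (hW : W ≤ ℓ.ker)
    (hdim : Module.finrank ℝ E + 1 ≤ Module.finrank ℝ W)
    (hnd : ∀ w ∈ W, w ≠ 0 → ∃ w' ∈ W, fderiv ℝ (fderiv ℝ Φ) p w w' ≠ 0) :
    ∃ U ∈ nhds p, DominatedByBallAverages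
      ((μH[(Module.finrank ℝ F : ℝ) - 1].restrict (S ∩ U)).map π) := by
  by_cases hker : π.ker ≤ ℓ.ker
  · exact exists_map_restrict_inter_of_ker_le hΦ hp hℓ hℓ₀ hS hπ hker hW hdim hnd
  · obtain ⟨e, hπe, he⟩ := SetLike.not_le_iff_exists.1 hker
    exact exists_map_restrict_inter_of_map_eq_zero hΦ hp hℓ he hS hπ hπe

end DominatedByBallAverages

end Hypersurface

section Marginals

theorem hess_eq_fderiv_fderiv {n : ℕ} {Φ : E2 n → ℝ} (hΦ : ContDiff ℝ 2 Φ) (p u v : E2 n) :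
    hess Φ p u v = fderiv ℝ (fderiv ℝ Φ) p u v := by
  rw [hess, (hasFDerivAt_fderiv_apply (hΦ.fderiv_right (by norm_num)) p v).fderiv]
  rfl

theorem DominatedByBallAverages.map_restrict_of_isCompact {X E : Type*} [TopologicalSpace X]
    [MeasurableSpace X] [NormedAddCommGroup E] [NormedSpace ℝ E] [MeasureSpace E] {μ : Measure X}
    {π : X → E} (hπ : Measurable π) {S : Set X} (hS : IsCompact S)
    (hloc : ∀ p ∈ S, ∃ U ∈ nhds p, DominatedByBallAverages ((μ.restrict (S ∩ U)).map π)) :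
    DominatedByBallAverages ((μ.restrict S).map π) := by
  suffices h : DominatedByBallAverages ((μ.restrict (S ∩ S)).map π) by rwa [inter_self] at h
  refine hS.induction_on (p := fun s => DominatedByBallAverages ((μ.restrict (S ∩ s)).map π))
    (by simpa using zero) (fun s t hst ht => ht.mono ?_) (fun s t hs ht => (hs.add ht).mono ?_)
    fun p hp => ?_
  · exact Measure.map_mono (Measure.restrict_mono_set _ (inter_subset_inter_right _ hst)) hπ
  · rw [inter_union_distrib_left, ← Measure.map_add _ _ hπ]
    exact Measure.map_mono (Measure.restrict_union_le _ _) hπ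
  · obtain ⟨U, hU, hdom⟩ := hloc p hp
    exact ⟨U, mem_nhdsWithin_of_mem_nhds hU, hdom⟩

variable {n : ℕ} {S : Set (E2 n)} {π : E2 n →L[ℝ] Rn n}

theorem dominatedByBallAverages_map_restrict_hausdorffMeasure
    (hS : IsSmoothHypersurfaceWithCurvatures n (n + 1) S) (hπ : Function.Surjective π) :
    DominatedByBallAverages (((μH[2 * (n : ℝ) - 1]).restrict S).map π) := by
  refine .map_restrict_of_isCompact π.measurable hS.1 fun p hp => ?_
  obtain ⟨U, Φ, hU, hpU, hΦ, hSU, hd, W, hW, hdim, hnd⟩ := hS.2 p hp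
  have hΦ₂ : ContDiff ℝ 2 Φ := contDiff_infty.1 hΦ 2
  have hzero : ∀ x ∈ U, x ∈ S → Φ x = 0 := fun x hxU hxS => (hSU.subset ⟨hxS, hxU⟩).2
  have hfinrank : (Module.finrank ℝ (E2 n) : ℝ) - 1 = 2 * n - 1 := by simp [two_mul]
  rw [← hfinrank]
  simp only [hess_eq_fderiv_fderiv hΦ₂] at hnd
  exact DominatedByBallAverages.exists_map_restrict_inter_of_nondegenerate hΦ₂ (hzero p hpU hp)
    (hΦ₂.differentiable two_ne_zero p).hasFDerivAt hd
    (Filter.mem_of_superset (hU.mem_nhds hpU) hzero) hπ hW (by simp [hdim]) hnd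

theorem dominatedByBallAverages_map_μSurf
    (hS : IsSmoothHypersurfaceWithCurvatures n (n + 1) S) (hπ : Function.Surjective π) :
    DominatedByBallAverages ((μSurf n S).map π) := by
  by_cases hnull : μH[2 * (n : ℝ) - 1] S = 0
  · rw [μSurf, Measure.restrict_eq_zero.2 hnull, smul_zero, Measure.map_zero]
    exact .zero
  · lift (μH[2 * (n : ℝ) - 1] S)⁻¹ to ℝ≥0 using ENNReal.inv_ne_top.2 hnull with c hc
    rw [μSurf, ← hc, Measure.map_smul]
    exact (dominatedByBallAverages_map_restrict_hausdorffMeasure hS hπ).smul c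

end Marginals

/-- Proposition 1.1: if the compact hypersurface `S ⊆ ℝⁿ × ℝⁿ` has at least `n+1`
non-vanishing principal curvatures, then `𝔐^S` maps `L^p × L^q → L^r` whenever
`1 < p, q, r ≤ ∞` and `1/r = 1/p + 1/q`. -/
theorem bilinear_maximal_nondegenerate_hypersurface
    (n : ℕ) (hn : 1 ≤ n) (S : Set (E2 n))
    (hS : IsSmoothHypersurfaceWithCurvatures n (n + 1) S)
    (p q r : ℝ≥0∞) (hp : 1 < p) (hq : 1 < q) (hr : 1 < r)
    (hpqr : 1 / r = 1 / p + 1 / q) :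
    ∃ C : ℝ≥0, ∀ f g : 𝓢(Rn n, ℝ),
      lpNormE volume (biMaxS n S f g) r ≤
        C * eLpNorm (f : Rn n → ℝ) p volume * eLpNorm (g : Rn n → ℝ) q volume := by
  have : NeZero n := ⟨by omega⟩
  obtain ⟨C, hC⟩ := exists_eLpNorm_bilinearMaximal_le
    (dominatedByBallAverages_map_μSurf (π := .fst ℝ (Rn n) (Rn n)) hS Prod.fst_surjective)
    (dominatedByBallAverages_map_μSurf (π := .snd ℝ (Rn n) (Rn n)) hS Prod.snd_surjective)
    hp hq hr (by simpa only [one_div] using hpqr.symm)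
  refine ⟨C, fun f g => ?_⟩
  rw [lpNormE_eq_eLpNorm]
  exact hC f.toBoundedContinuousFunction g.toBoundedContinuousFunction
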